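/- arXiv:2308.01388 — 2 statements merged into one kernel-verified Lean document; each statement's English description precedes it below -/
import Mathlib

section
/- (Theorem 4.1(iv), first case.) Uniformly over all λ ∈ C⁺ with β_λ ≤ α_λ and all X ∈ a with x3 ≥ x1 ≥ x2, one has E_k(X,λ) ≍ e^{⟨λ,X⁺⟩} / [ (1+α_λ α_{X⁺})^{k+1} (1+β_λ β_{X⁺})^{k+1} (1+γ_λ γ_{X⁺})^{k} ]. -/
open Real MeasureTheory

/-- The rank-one Dunkl kernel `E_k^{rk1}(x,v)`. -/
noncomputable def Erk1 (k x v : ℝ) : ℝ :=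
  (Real.Gamma (k + 1/2) / (Real.sqrt Real.pi * Real.Gamma k)) *
    ∫ z in (-1 : ℝ)..1, Real.exp (z * x * v) * (1 - z) ^ (k - 1) * (1 + z) ^ k

/-- The normalized modified Bessel function `𝒥_a(y)`, for `a > -1/2`. -/
noncomputable def besselJ (a y : ℝ) : ℝ :=
  (Real.Gamma (a + 1) / (Real.sqrt Real.pi * Real.Gamma (a + 1/2))) *
    ∫ z in (-1 : ℝ)..1, Real.exp (y * z) * (1 - z ^ 2) ^ (a - 1/2)

/-- `W_k(λ,ν)`. -/
noncomputable def Wk (k l1 l2 l3 n1 n2 : ℝ) : ℝ :=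
  ((l1 - n1) * (l1 - n2) * (n1 - l2) * (l2 - n2) * (n1 - l3) * (n2 - l3)) ^ (k - 1)

/-- `V(λ) = (λ1-λ2)(λ1-λ3)(λ2-λ3)`. -/
def Vlam (l1 l2 l3 : ℝ) : ℝ := (l1 - l2) * (l1 - l3) * (l2 - l3)

/-- The `A₂` Dunkl kernel `E_k(X,λ)`, defined via the rank-one kernel formula. -/
noncomputable def EkA2 (k x1 x2 x3 l1 l2 l3 : ℝ) : ℝ :=
  (3 * Real.Gamma (3 * k) / (Vlam l1 l2 l3 ^ (2 * k) * Real.Gamma k ^ 2)) *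
    ∫ n2 in l3..l2, ∫ n1 in l2..l1,
      ((n1 - l2) * (l1 - n2) * Erk1 k ((x1 - x2) / 2) (n1 - n2)
        + (l1 - n1) * (l2 - n2) * Erk1 k (-(x1 - x2) / 2) (n1 - n2))
      * ((n1 - l3) * (n2 - l3)) * Real.exp ((x1 + x2 - 2 * x3) * (n1 + n2) / 2)
      * Wk k l1 l2 l3 n1 n2

/-!
Write `a = λ₁ - λ₂`, `b = λ₂ - λ₃`, `p = x₃ - x₁`, `q = x₁ - x₂`, and let `s = ν₁ - λ₂`,
`r = ν₂ - λ₃` be the distances to the corner `(λ₂, λ₃)`, where the exponent is maximal. The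
rank-one kernels are confluent hypergeometric integrals; after the factor `e^⟨λ, X⁺⟩` is taken out
they leave the weight `e^{-ps - (p + q)r}` times powers of `1 + q (s + b - r)`. This weight
concentrates at the scales `σ = a / (1 + ap)` for `s` and `ρ = b / (1 + b(p + q))` for `r`, and the
other factors vary slowly: moving away from these scales costs only powers of `1 + ps` and
`1 + (p + q)r`, which half of the exponential absorbs. So the double integral is at most of the
size predicted by the values at scale, and integrating over `σ/4 ≤ s ≤ σ/2`, `ρ/4 ≤ r ≤ ρ/2` alone
already gives that size.
-/

/-- `ComparableWith C x y` says that the nonnegative numbers `x` and `y` agree up to the constant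
`C`; it is the relation `x ≍ y` with its constant displayed, so that uniformity of an estimate in
some variables means that `C` is chosen before them. -/
structure ComparableWith (C x y : ℝ) : Prop where
  pos : 0 < C
  nonneg : 0 ≤ y
  le : x ≤ C * y
  ge : y ≤ C * x

namespace ComparableWith

variable {C D x y z x' y' : ℝ}

lemma refl (hx : 0 ≤ x) : ComparableWith 1 x x :=
  ⟨one_pos, hx, (one_mul x).ge, (one_mul x).ge⟩

lemma left_nonneg (h : ComparableWith C x y) : 0 ≤ x :=
  nonneg_of_mul_nonneg_right (h.nonneg.trans h.ge) h.pos

lemma symm (h : ComparableWith C x y) : ComparableWith C y x :=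
  ⟨h.pos, h.left_nonneg, h.ge, h.le⟩

lemma mono (h : ComparableWith C x y) (hCD : C ≤ D) : ComparableWith D x y :=
  ⟨h.pos.trans_le hCD, h.nonneg, h.le.trans (mul_le_mul_of_nonneg_right hCD h.nonneg),
    h.ge.trans (mul_le_mul_of_nonneg_right hCD h.left_nonneg)⟩

lemma trans (hxy : ComparableWith C x y) (hyz : ComparableWith D y z) :
    ComparableWith (C * D) x z where
  pos := mul_pos hxy.pos hyz.pos
  nonneg := hyz.nonneg
  le := calc
    x ≤ C * y := hxy.le
    _ ≤ C * (D * z) := mul_le_mul_of_nonneg_left hyz.le hxy.pos.le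
    _ = C * D * z := by ring
  ge := calc
    z ≤ D * y := hyz.ge
    _ ≤ D * (C * x) := mul_le_mul_of_nonneg_left hxy.ge hyz.pos.le
    _ = C * D * x := by ring

lemma mul (h : ComparableWith C x y) (h' : ComparableWith D x' y') :
    ComparableWith (C * D) (x * x') (y * y') where
  pos := mul_pos h.pos h'.pos
  nonneg := mul_nonneg h.nonneg h'.nonneg
  le := (mul_le_mul h.le h'.le h'.left_nonneg (mul_nonneg h.pos.le h.nonneg)).trans_eq (by ring)
  ge := (mul_le_mul h.ge h'.ge h'.nonneg (mul_nonneg h.pos.le h.left_nonneg)).trans_eq (by ring)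

lemma const_mul {c : ℝ} (hc : 0 ≤ c) (h : ComparableWith C x y) :
    ComparableWith C (c * x) (c * y) :=
  one_mul C ▸ (refl hc).mul h

lemma div (h : ComparableWith C x y) (h' : ComparableWith D x' y') (hx' : 0 < x') (hy' : 0 < y') :
    ComparableWith (C * D) (x / x') (y / y') := by
  have inv : ComparableWith D x'⁻¹ y'⁻¹ := by
    refine ⟨h'.pos, (inv_pos.2 hy').le, ?_, ?_⟩
    · rw [inv_le_iff_one_le_mul₀ hx', mul_right_comm, ← div_eq_mul_inv, one_le_div hy']
      exact h'.ge
    · rw [inv_le_iff_one_le_mul₀ hy', mul_right_comm, ← div_eq_mul_inv, one_le_div hx']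
      exact h'.le
  simpa only [div_eq_mul_inv] using h.mul inv

lemma add (h : ComparableWith C x y) (h' : ComparableWith D x' y') :
    ComparableWith (max C D) (x + x') (y + y') where
  pos := lt_max_of_lt_left h.pos
  nonneg := add_nonneg h.nonneg h'.nonneg
  le := (add_le_add (h.mono (le_max_left C D)).le (h'.mono (le_max_right C D)).le).trans_eq
    (mul_add _ _ _).symm
  ge := (add_le_add (h.mono (le_max_left C D)).ge (h'.mono (le_max_right C D)).ge).trans_eq
    (mul_add _ _ _).symm

lemma rpow (h : ComparableWith C x y) (hx : 0 < x) (hy : 0 < y) (e : ℝ) :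
    ComparableWith (C ^ |e|) (x ^ e) (y ^ e) := by
  have rpow_le {x y : ℝ} (hx : 0 < x) (hy : 0 < y) (h : ComparableWith C x y) :
      x ^ e ≤ C ^ |e| * y ^ e := by
    rcases le_total 0 e with he | he
    · rw [abs_of_nonneg he, ← mul_rpow h.pos.le hy.le]
      exact rpow_le_rpow hx.le h.le he
    · rw [abs_of_nonpos he, rpow_neg h.pos.le, ← inv_rpow h.pos.le,
        ← mul_rpow (inv_pos.2 h.pos).le hy.le]
      exact rpow_le_rpow_of_nonpos (mul_pos (inv_pos.2 h.pos) hy)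
        ((inv_mul_le_iff₀ h.pos).2 h.ge) he
  exact ⟨rpow_pos_of_pos h.pos _, (rpow_pos_of_pos hy e).le, rpow_le hx hy h, rpow_le hy hx h.symm⟩

lemma one_right (hx : 0 < x) : ComparableWith (max x x⁻¹) x 1 where
  pos := lt_max_of_lt_left hx
  nonneg := zero_le_one
  le := (le_max_left x x⁻¹).trans_eq (mul_one _).symm
  ge := (inv_mul_cancel₀ hx.ne').symm.trans_le
    (mul_le_mul_of_nonneg_right (le_max_right x x⁻¹) hx.le)

lemma inv_mul_le (h : ComparableWith C x y) : C⁻¹ * y ≤ x :=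
  (inv_mul_le_iff₀ h.pos).2 h.ge

end ComparableWith

lemma rpow_sub_one_mul_self {x : ℝ} (hx : x ≠ 0) (k : ℝ) : x ^ (k - 1) * x = x ^ k := by
  rw [← rpow_add_one hx, sub_add_cancel]

lemma one_add_rpow_le_exp_half {k t : ℝ} (hk : 0 < k) (ht : 0 ≤ t) :
    (1 + t) ^ k ≤ (2 * k + 1) ^ k * exp (t / 2) := by
  have base_le : 1 + t ≤ (2 * k + 1) * exp (t / (2 * k)) := calc
    1 + t ≤ (2 * k + 1) * (t / (2 * k) + 1) := by
      have : (2 * k + 1) * (t / (2 * k) + 1) = 1 + t + (2 * k + t / (2 * k)) := by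
        field_simp; ring
      rw [this]
      exact le_add_of_nonneg_right (by positivity)
    _ ≤ _ := by gcongr; exact add_one_le_exp _
  calc (1 + t) ^ k ≤ ((2 * k + 1) * exp (t / (2 * k))) ^ k :=
        rpow_le_rpow (by positivity) base_le hk.le
    _ = (2 * k + 1) ^ k * exp (t / 2) := by
      rw [mul_rpow (by positivity) (exp_pos _).le, ← exp_mul]
      congr 2; field_simp

/-- The length scale of the weight `e^{-ps}` on `[0, a]`: it is comparable to `min a (1 / p)`. -/
noncomputable def laplaceScale (a p : ℝ) : ℝ := a / (1 + a * p)

section LaplaceScale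

variable {a b p q s : ℝ}

lemma laplaceScale_pos (ha : 0 < a) (hp : 0 ≤ p) : 0 < laplaceScale a p := by
  unfold laplaceScale; positivity

lemma laplaceScale_le_self (ha : 0 < a) (hp : 0 ≤ p) : laplaceScale a p ≤ a :=
  div_le_self ha.le (le_add_of_nonneg_right (by positivity))

lemma mul_laplaceScale_le_one (ha : 0 < a) (hp : 0 ≤ p) : p * laplaceScale a p ≤ 1 := by
  rw [laplaceScale, mul_div_assoc', div_le_one (by positivity)]
  linarith

lemma div_laplaceScale (ha : 0 < a) (hp : 0 ≤ p) : s / laplaceScale a p = s / a + p * s := by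
  unfold laplaceScale; field_simp

lemma laplaceScale_le_mul {c : ℝ} (hs : 0 < s) (ha : 0 < a) (hp : 0 ≤ p) (hc : 1 ≤ c)
    (hsa : s ≤ c * a) : laplaceScale s p ≤ c * laplaceScale a p := by
  rw [laplaceScale, laplaceScale, mul_div_assoc', div_le_div_iff₀ (by positivity) (by positivity)]
  have : 0 ≤ (c - 1) * (s * a * p) := mul_nonneg (sub_nonneg.2 hc) (by positivity)
  nlinarith

lemma laplaceScale_half_le (ha : 0 < a) (hp : 0 ≤ p) :
    laplaceScale a (p / 2) ≤ 2 * laplaceScale a p := by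
  have : 0 ≤ a * a * p := by positivity
  rw [laplaceScale, laplaceScale, mul_div_assoc' 2, div_le_div_iff₀ (by positivity) (by positivity)]
  nlinarith

end LaplaceScale

/-- The integrand of Kummer's integral representation of the confluent hypergeometric function. -/
noncomputable def kummerIntegrand (u w a p s : ℝ) : ℝ :=
  exp (-(p * s)) * s ^ (u - 1) * (a - s) ^ (w - 1)

/-- Kummer's integral `∫₀ᵃ e^{-ps} s^{u-1} (a-s)^{w-1} ds`, which equals
`a^{u+w-1} B(u, w) ₁F₁(u; u + w; -ap)`. -/
noncomputable def kummerIntegral (u w a p : ℝ) : ℝ := ∫ s in (0 : ℝ)..a, kummerIntegrand u w a p s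

section Kummer

variable {u w a p x s : ℝ}

lemma kummerIntegrand_nonneg (hs : s ∈ Set.Icc 0 a) : 0 ≤ kummerIntegrand u w a p s := by
  have := hs.1
  have : 0 ≤ a - s := sub_nonneg.2 hs.2
  unfold kummerIntegrand; positivity

lemma kummerIntegrand_sub_self (u w a p s : ℝ) :
    kummerIntegrand u w a p (a - s) = exp (-(p * a)) * kummerIntegrand w u a (-p) s := by
  rw [kummerIntegrand, kummerIntegrand, sub_sub_cancel, ← mul_assoc, ← mul_assoc, ← exp_add]
  ring_nf

lemma kummerIntegral_eq_exp_mul (u w a p : ℝ) :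
    kummerIntegral u w a p = exp (-(p * a)) * kummerIntegral w u a (-p) := by
  have reflected := intervalIntegral.integral_comp_sub_left (a := 0) (b := a)
    (kummerIntegrand u w a p) a
  rw [sub_self, sub_zero] at reflected
  simp only [kummerIntegral, ← reflected, kummerIntegrand_sub_self,
    intervalIntegral.integral_const_mul]

lemma intervalIntegrable_kummerIntegrand (p : ℝ) (hu : 0 < u) (hw : 0 < w) (ha : 0 < a) :
    IntervalIntegrable (kummerIntegrand u w a p) volume 0 a := by
  have left_half {u w p : ℝ} (hu : 0 < u) :
      IntervalIntegrable (kummerIntegrand u w a p) volume 0 (a / 2) := by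
    have power : IntervalIntegrable (fun s : ℝ => s ^ (u - 1)) volume 0 (a / 2) :=
      intervalIntegral.intervalIntegrable_rpow' (by linarith)
    have smooth : ContinuousOn (fun s => exp (-(p * s)) * (a - s) ^ (w - 1))
        (Set.uIcc 0 (a / 2)) := by
      rw [Set.uIcc_of_le (by linarith)]
      refine ContinuousOn.mul (by fun_prop) (ContinuousOn.rpow_const (by fun_prop) ?_)
      exact fun s hs => Or.inl (by linarith [hs.2])
    exact (power.continuousOn_mul smooth).congr fun s _ => mul_right_comm _ _ _
  have right_half : IntervalIntegrable (kummerIntegrand u w a p) volume (a / 2) a := by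
    have reflected := ((left_half (w := u) (p := -p) hw).const_mul (exp (-(p * a)))).comp_sub_left a
    rw [sub_zero, sub_half] at reflected
    refine reflected.symm.congr fun s _ => ?_
    simp only [← kummerIntegrand_sub_self, sub_sub_cancel]
  exact (left_half hu).trans right_half

lemma kummerIntegral_eq_rpow_mul (u w p : ℝ) (ha : 0 < a) :
    kummerIntegral u w a p = a ^ (u + w - 1) * kummerIntegral u w 1 (a * p) := by
  have rescaled := intervalIntegral.mul_integral_comp_mul_left (a := 0) (b := 1)
    (f := kummerIntegrand u w a p) a
  rw [mul_zero, mul_one] at rescaled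
  rw [kummerIntegral, kummerIntegral, ← rescaled, ← intervalIntegral.integral_const_mul,
    ← intervalIntegral.integral_const_mul]
  refine intervalIntegral.integral_congr fun t ht => ?_
  rw [Set.uIcc_of_le zero_le_one] at ht
  have power : a ^ (u + w - 1) = a * a ^ (u - 1) * a ^ (w - 1) := by
    rw [mul_assoc, ← rpow_add ha, mul_comm, ← rpow_add_one ha.ne']
    ring_nf
  simp only [kummerIntegrand]
  rw [show a - a * t = a * (1 - t) by ring, mul_rpow ha.le ht.1,
    mul_rpow ha.le (sub_nonneg.2 ht.2), power, mul_left_comm p, mul_assoc a p]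
  ring

lemma kummerIntegrand_one_le (hx : 0 ≤ x) (hu : 0 < u) {t : ℝ} (ht : t ∈ Set.Ioo 0 1) :
    kummerIntegrand u w 1 x t ≤
      2 ^ |w - 1| * exp 1 * (t ^ (u - 1) * exp (-((1 + x) * t))) +
        (2 * u + 1) ^ u * (1 + x) ^ (-u) * kummerIntegrand u w 1 0 t := by
  have ht0 : 0 < t := ht.1
  have ht1 : 0 < 1 - t := sub_pos.2 ht.2
  have first_nonneg : 0 ≤ 2 ^ |w - 1| * exp 1 * (t ^ (u - 1) * exp (-((1 + x) * t))) := by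
    positivity
  have second_nonneg : 0 ≤ (2 * u + 1) ^ u * (1 + x) ^ (-u) * kummerIntegrand u w 1 0 t :=
    mul_nonneg (by positivity) (kummerIntegrand_nonneg ⟨ht0.le, ht.2.le⟩)
  rcases le_total t (1 / 2) with h | h
  · have weight_le : (1 - t) ^ (w - 1) ≤ 2 ^ |w - 1| := by
      have near_one : ComparableWith 2 (1 - t) 1 := ⟨two_pos, zero_le_one, by linarith, by linarith⟩
      simpa using (near_one.rpow ht1 one_pos (w - 1)).le
    have exp_le : exp (-(x * t)) ≤ exp 1 * exp (-((1 + x) * t)) := by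
      rw [← exp_add, exp_le_exp]; linarith
    calc kummerIntegrand u w 1 x t
        ≤ exp 1 * exp (-((1 + x) * t)) * t ^ (u - 1) * 2 ^ |w - 1| := by
          unfold kummerIntegrand; gcongr
      _ ≤ _ := by linarith
  · have exp_le : exp (-(x * t)) ≤ (2 * u + 1) ^ u * (1 + x) ^ (-u) := calc
      exp (-(x * t)) ≤ exp (-(x / 2)) := by rw [exp_le_exp]; nlinarith
      _ ≤ _ := by
        rw [exp_neg, rpow_neg (by positivity), ← div_eq_mul_inv, inv_eq_one_div,
          div_le_div_iff₀ (exp_pos _) (by positivity), one_mul]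
        exact one_add_rpow_le_exp_half hu hx
    calc kummerIntegrand u w 1 x t
        ≤ (2 * u + 1) ^ u * (1 + x) ^ (-u) * kummerIntegrand u w 1 0 t := by
          simp only [kummerIntegrand, zero_mul, neg_zero, exp_zero, one_mul]
          rw [mul_assoc (exp _)]
          gcongr
      _ ≤ _ := by linarith

lemma integrableOn_rpow_mul_exp_neg {c : ℝ} (hu : 0 < u) (hc : 0 < c) :
    IntegrableOn (fun t : ℝ => t ^ (u - 1) * exp (-(c * t))) (Set.Ioi 0) := by
  simpa using integrableOn_rpow_mul_exp_neg_mul_rpow (s := u - 1) (p := 1) (by linarith) one_pos hc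

lemma kummerIntegral_one_le (hu : 0 < u) (hw : 0 < w) (hx : 0 ≤ x) :
    kummerIntegral u w 1 x ≤
      (2 ^ |w - 1| * exp 1 * Gamma u + (2 * u + 1) ^ u * kummerIntegral u w 1 0) *
        (1 + x) ^ (-u) := by
  have gamma_integrable := integrableOn_rpow_mul_exp_neg hu (show 0 < 1 + x by positivity)
  have gamma_integrable_unit :
      IntervalIntegrable (fun t : ℝ => t ^ (u - 1) * exp (-((1 + x) * t))) volume 0 1 := by
    rw [intervalIntegrable_iff_integrableOn_Ioc_of_le zero_le_one]
    exact gamma_integrable.mono_set Set.Ioc_subset_Ioi_self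
  have gamma_le : ∫ t in (0 : ℝ)..1, t ^ (u - 1) * exp (-((1 + x) * t)) ≤
      (1 + x) ^ (-u) * Gamma u := by
    have gamma_eq := integral_rpow_mul_exp_neg_mul_Ioi hu (show 0 < 1 + x by positivity)
    rw [one_div, inv_rpow (by positivity), ← rpow_neg (by positivity)] at gamma_eq
    rw [intervalIntegral.integral_of_le zero_le_one, ← gamma_eq]
    refine setIntegral_mono_set gamma_integrable ?_ Set.Ioc_subset_Ioi_self.eventuallyLE
    filter_upwards [ae_restrict_mem measurableSet_Ioi] with t ht
    have : 0 < t := ht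
    change 0 ≤ t ^ (u - 1) * exp (-((1 + x) * t))
    positivity
  have beta_integrable := intervalIntegrable_kummerIntegrand 0 hu hw one_pos
  have mono := intervalIntegral.integral_mono_on_of_le_Ioo zero_le_one
    (intervalIntegrable_kummerIntegrand x hu hw one_pos)
    ((gamma_integrable_unit.const_mul _).add (beta_integrable.const_mul _))
    fun t ht => kummerIntegrand_one_le (w := w) hx hu ht
  rw [intervalIntegral.integral_add (gamma_integrable_unit.const_mul _)
    (beta_integrable.const_mul _), intervalIntegral.integral_const_mul,
    intervalIntegral.integral_const_mul] at mono
  calc kummerIntegral u w 1 x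
      ≤ 2 ^ |w - 1| * exp 1 * ((1 + x) ^ (-u) * Gamma u) +
        (2 * u + 1) ^ u * (1 + x) ^ (-u) * kummerIntegral u w 1 0 := mono.trans (by gcongr; rfl)
    _ = _ := by ring

lemma le_kummerIntegral_one (hu : 0 < u) (hw : 0 < w) (hx : 0 ≤ x) :
    exp (-1) * (2 ^ |w - 1|)⁻¹ * (2 ^ u * u)⁻¹ * (1 + x) ^ (-u) ≤ kummerIntegral u w 1 x := by
  set τ := (2 * (1 + x))⁻¹ with hτ
  have hτ0 : 0 < τ := by positivity
  have hτx : (1 + x) * τ = 1 / 2 := by rw [hτ]; field_simp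
  have hτ1 : τ ≤ 1 / 2 := by nlinarith
  have integrable := intervalIntegrable_kummerIntegrand x hu hw one_pos
  have pointwise : ∀ t ∈ Set.Ioo 0 τ,
      exp (-1) * (2 ^ |w - 1|)⁻¹ * t ^ (u - 1) ≤ kummerIntegrand u w 1 x t := by
    intro t ht
    have ht0 : 0 < t := ht.1
    have ht1 : 0 < 1 - t := by linarith [ht.2]
    have near_one : ComparableWith 2 (1 - t) 1 :=
      ⟨two_pos, zero_le_one, by linarith, by linarith [ht.2]⟩
    have le_weight : (2 ^ |w - 1|)⁻¹ ≤ (1 - t) ^ (w - 1) := by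
      simpa using (near_one.rpow ht1 one_pos (w - 1)).inv_mul_le
    have le_exp : exp (-1) ≤ exp (-(x * t)) := by
      rw [exp_le_exp]
      nlinarith [mul_le_mul_of_nonneg_left ht.2.le hx]
    unfold kummerIntegrand
    rw [mul_right_comm]
    gcongr
  calc exp (-1) * (2 ^ |w - 1|)⁻¹ * (2 ^ u * u)⁻¹ * (1 + x) ^ (-u)
      = exp (-1) * (2 ^ |w - 1|)⁻¹ * (τ ^ u / u) := by
        rw [hτ, inv_rpow (by positivity), mul_rpow two_pos.le (by positivity),
          rpow_neg (by positivity)]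
        field_simp
    _ = ∫ t in (0 : ℝ)..τ, exp (-1) * (2 ^ |w - 1|)⁻¹ * t ^ (u - 1) := by
        rw [intervalIntegral.integral_const_mul, integral_rpow (Or.inl (by linarith))]
        simp [zero_rpow hu.ne']
    _ ≤ ∫ t in (0 : ℝ)..τ, kummerIntegrand u w 1 x t :=
        intervalIntegral.integral_mono_on_of_le_Ioo hτ0.le
          ((intervalIntegral.intervalIntegrable_rpow' (by linarith)).const_mul _)
          (integrable.mono_set (by
            rw [Set.uIcc_of_le hτ0.le, Set.uIcc_of_le zero_le_one]
            exact Set.Icc_subset_Icc le_rfl (by linarith))) pointwise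
    _ ≤ kummerIntegral u w 1 x := by
        refine intervalIntegral.integral_mono_interval le_rfl hτ0.le (by linarith) ?_ integrable
        filter_upwards [ae_restrict_mem measurableSet_Ioc] with t ht
        exact kummerIntegrand_nonneg ⟨ht.1.le, ht.2⟩

lemma exists_comparableWith_kummerIntegral_one (hu : 0 < u) (hw : 0 < w) :
    ∃ C, ∀ x, 0 ≤ x → ComparableWith C (kummerIntegral u w 1 x) ((1 + x) ^ (-u)) := by
  set lower := exp (-1) * (2 ^ |w - 1|)⁻¹ * (2 ^ u * u)⁻¹
  set upper := 2 ^ |w - 1| * exp 1 * Gamma u + (2 * u + 1) ^ u * kummerIntegral u w 1 0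
  have lower_pos : 0 < lower := by positivity
  refine ⟨max lower⁻¹ upper, fun x hx => ⟨lt_max_of_lt_left (inv_pos.2 lower_pos), by positivity,
    ?_, ?_⟩⟩
  · refine (kummerIntegral_one_le hu hw hx).trans ?_
    gcongr
    exact le_max_right _ _
  · have le_integral := le_kummerIntegral_one hu hw hx
    have : 0 ≤ kummerIntegral u w 1 x := le_trans (by positivity) le_integral
    refine ((le_inv_mul_iff₀ lower_pos).2 le_integral).trans ?_
    gcongr
    exact le_max_left _ _

lemma exists_kummerIntegral_half_le (hu : 0 < u) (hw : 0 < w) :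
    ∃ C, 0 < C ∧ ∀ a p, 0 < a → 0 ≤ p →
      kummerIntegral u w a (p / 2) ≤ C * (a ^ (w - 1) * laplaceScale a p ^ u) := by
  obtain ⟨C, hC⟩ := exists_comparableWith_kummerIntegral_one hu hw
  have hC0 : 0 < C := (hC 0 le_rfl).pos
  refine ⟨C * 2 ^ u, by positivity, fun a p ha hp => ?_⟩
  have scale_pos : 0 < laplaceScale a (p / 2) := laplaceScale_pos ha (by positivity)
  calc kummerIntegral u w a (p / 2)
      ≤ a ^ (u + w - 1) * (C * (1 + a * (p / 2)) ^ (-u)) := by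
        rw [kummerIntegral_eq_rpow_mul u w _ ha]
        gcongr
        exact (hC _ (by positivity)).le
    _ = C * (a ^ (w - 1) * laplaceScale a (p / 2) ^ u) := by
        rw [laplaceScale, div_rpow ha.le (by positivity), rpow_neg (by positivity), add_sub_assoc,
          rpow_add ha]
        ring
    _ ≤ C * (a ^ (w - 1) * (2 * laplaceScale a p) ^ u) := by
        gcongr
        exact laplaceScale_half_le ha hp
    _ = C * 2 ^ u * (a ^ (w - 1) * laplaceScale a p ^ u) := by
        rw [mul_rpow two_pos.le (laplaceScale_pos ha hp).le]
        ring

lemma measurable_kummerIntegral (u w a : ℝ) : Measurable (kummerIntegral u w a) := by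
  unfold kummerIntegral intervalIntegral
  have joint : StronglyMeasurable fun z : ℝ × ℝ => kummerIntegrand u w a z.1 z.2 := by
    unfold kummerIntegrand
    exact (by fun_prop : Measurable _).stronglyMeasurable
  exact joint.integral_prod_right.measurable.sub joint.integral_prod_right.measurable

end Kummer

section Reduction

/-- The normalization of `Erk1` in terms of `kummerIntegral`. -/
noncomputable def rankOneConst (k : ℝ) : ℝ :=
  Gamma (k + 1 / 2) / (√π * Gamma k) * (2 * 2 ^ (k - 1) * 2 ^ k)

lemma rankOneConst_pos {k : ℝ} (hk : 0 < k) : 0 < rankOneConst k := by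
  have := Gamma_pos_of_pos hk
  have : 0 < Gamma (k + 1 / 2) := Gamma_pos_of_pos (by positivity)
  unfold rankOneConst; positivity

lemma Erk1_eq_exp_mul_kummerIntegral (k x v : ℝ) :
    Erk1 k x v = rankOneConst k * (exp (x * v) * kummerIntegral k (k + 1) 1 (2 * x * v)) := by
  have substituted := intervalIntegral.mul_integral_comp_sub_mul (a := 0) (b := 1)
    (f := fun z : ℝ => exp (z * x * v) * (1 - z) ^ (k - 1) * (1 + z) ^ k) 2 1
  norm_num at substituted
  rw [Erk1, rankOneConst, mul_assoc, ← substituted]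
  simp only [kummerIntegral, ← intervalIntegral.integral_const_mul]
  refine intervalIntegral.integral_congr fun t ht => ?_
  rw [Set.uIcc_of_le zero_le_one] at ht
  have exp_eq : exp ((1 - 2 * t) * x * v) = exp (x * v) * exp (-(2 * x * v * t)) := by
    rw [← exp_add]; ring_nf
  have lower_eq : (2 * t) ^ (k - 1) = 2 ^ (k - 1) * t ^ (k - 1) := mul_rpow two_pos.le ht.1
  have upper_eq : (1 + (1 - 2 * t)) ^ k = 2 ^ k * (1 - t) ^ k := by
    rw [← mul_rpow two_pos.le (sub_nonneg.2 ht.2)]; ring_nf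
  simp only [kummerIntegrand, add_sub_cancel_right, exp_eq, lower_eq, upper_eq]
  ring

lemma Erk1_neg_eq_exp_mul_kummerIntegral (k x v : ℝ) :
    Erk1 k (-x) v = rankOneConst k * (exp (x * v) * kummerIntegral (k + 1) k 1 (2 * x * v)) := by
  rw [Erk1_eq_exp_mul_kummerIntegral, kummerIntegral_eq_exp_mul, ← mul_assoc (exp _), ← exp_add]
  ring_nf

/-- The integrand of `EkA2` in the coordinates `s = ν₁ - λ₂ ∈ (0, a)` and `r = ν₂ - λ₃ ∈ (0, b)`,
where `a = λ₁ - λ₂`, `b = λ₂ - λ₃`, `p = x₃ - x₁` and `q = x₁ - x₂`, with the leading exponential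
and the constants taken out. -/
noncomputable def kernelDensity (k a b p q r s : ℝ) : ℝ :=
  (s * (a + b - r) * kummerIntegral k (k + 1) 1 (q * (s + b - r)) +
    (a - s) * (b - r) * kummerIntegral (k + 1) k 1 (q * (s + b - r))) * ((s + b) * r) *
    exp (-(p * s) - (p + q) * r) *
    ((a - s) * (a + b - r) * s * (b - r) * (s + b) * r) ^ (k - 1)

lemma measurable_kernelDensity (k a b p q : ℝ) :
    Measurable fun z : ℝ × ℝ => kernelDensity k a b p q z.1 z.2 := by
  have (u w : ℝ) : Measurable fun z : ℝ × ℝ => kummerIntegral u w 1 (q * (z.2 + b - z.1)) :=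
    (measurable_kummerIntegral u w 1).comp (by fun_prop)
  unfold kernelDensity
  fun_prop

lemma EkA2_integrand_eq {l1 l2 l3 : ℝ} (k x1 x2 x3 r s : ℝ) (hl : l1 + l2 + l3 = 0) :
    ((l2 + s - l2) * (l1 - (l3 + r)) * Erk1 k ((x1 - x2) / 2) (l2 + s - (l3 + r)) +
      (l1 - (l2 + s)) * (l2 - (l3 + r)) * Erk1 k (-(x1 - x2) / 2) (l2 + s - (l3 + r))) *
      ((l2 + s - l3) * (l3 + r - l3)) *
      exp ((x1 + x2 - 2 * x3) * (l2 + s + (l3 + r)) / 2) * Wk k l1 l2 l3 (l2 + s) (l3 + r) =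
    rankOneConst k * exp (l1 * x3 + l2 * x1 + l3 * x2) *
      kernelDensity k (l1 - l2) (l2 - l3) (x3 - x1) (x1 - x2) r s := by
  have argument_eq : l2 + s - (l3 + r) = s + (l2 - l3) - r := by ring
  have weight_eq : (l1 - (l2 + s)) * (l1 - (l3 + r)) * (l2 + s - l2) * (l2 - (l3 + r)) *
      (l2 + s - l3) * (l3 + r - l3) = (l1 - l2 - s) * (l1 - l2 + (l2 - l3) - r) * s *
      (l2 - l3 - r) * (s + (l2 - l3)) * r := by ring
  have exp_eq : exp ((x1 + x2 - 2 * x3) * (l2 + s + (l3 + r)) / 2) *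
      exp ((x1 - x2) / 2 * (s + (l2 - l3) - r)) =
      exp (l1 * x3 + l2 * x1 + l3 * x2) * exp (-((x3 - x1) * s) - (x3 - x1 + (x1 - x2)) * r) := by
    rw [← exp_add, ← exp_add]
    congr 1
    linear_combination -x3 * hl
  rw [neg_div, Erk1_eq_exp_mul_kummerIntegral, Erk1_neg_eq_exp_mul_kummerIntegral, Wk,
    kernelDensity, mul_div_cancel₀ (x1 - x2) two_ne_zero, argument_eq, weight_eq]
  set K₁ := kummerIntegral k (k + 1) 1 ((x1 - x2) * (s + (l2 - l3) - r))
  set K₂ := kummerIntegral (k + 1) k 1 ((x1 - x2) * (s + (l2 - l3) - r))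
  set W := ((l1 - l2 - s) * (l1 - l2 + (l2 - l3) - r) * s * (l2 - l3 - r) *
    (s + (l2 - l3)) * r) ^ (k - 1)
  linear_combination rankOneConst k * (s * (l1 - l3 - r) * K₁ +
    (l1 - l2 - s) * (l2 - l3 - r) * K₂) * ((s + (l2 - l3)) * r) * W * exp_eq

lemma EkA2_eq_exp_mul_integral_kernelDensity {l1 l2 l3 : ℝ} (k x1 x2 x3 : ℝ)
    (hl : l1 + l2 + l3 = 0) :
    EkA2 k x1 x2 x3 l1 l2 l3 =
      3 * Gamma (3 * k) / Gamma k ^ 2 * rankOneConst k * (Vlam l1 l2 l3 ^ (2 * k))⁻¹ *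
        exp (l1 * x3 + l2 * x1 + l3 * x2) *
        ∫ r in (0 : ℝ)..(l2 - l3), ∫ s in (0 : ℝ)..(l1 - l2),
          kernelDensity k (l1 - l2) (l2 - l3) (x3 - x1) (x1 - x2) r s := by
  have shift (f : ℝ → ℝ) (c d : ℝ) : ∫ t in c..d, f t = ∫ t in (0 : ℝ)..(d - c), f (c + t) := by
    rw [intervalIntegral.integral_comp_add_left, add_zero, add_sub_cancel]
  rw [EkA2, shift _ l3 l2]
  simp only [shift _ l2 l1, EkA2_integrand_eq k x1 x2 x3 _ _ hl,
    intervalIntegral.integral_const_mul]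
  field_simp

end Reduction

section ScaleAlgebra

variable {a b p q x : ℝ}

lemma laplaceScale_le_add_div (hb : 0 < b) (hq : 0 ≤ q) (hx : 0 ≤ x) :
    laplaceScale b q ≤ x + b / (1 + q * (x + b)) := by
  have difference : laplaceScale b q - b / (1 + q * (x + b)) =
      x * (q * b / ((1 + b * q) * (1 + q * (x + b)))) := by
    unfold laplaceScale; field_simp; ring
  have ratio_le_one : q * b / ((1 + b * q) * (1 + q * (x + b))) ≤ 1 := by
    rw [div_le_one (by positivity), ← sub_nonneg]
    ring_nf
    positivity
  linarith [mul_le_of_le_one_right hx ratio_le_one]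

lemma comparableWith_laplaceScale_add_laplaceScale (ha : 0 < a) (hb : 0 < b) (hba : b ≤ a)
    (hp : 0 ≤ p) (hq : 0 ≤ q) :
    ComparableWith 2 (laplaceScale a p + laplaceScale b q)
      (laplaceScale a p * (1 + b * (p + q)) / (1 + b * q)) := by
  have σ_pos := laplaceScale_pos ha hp
  have σp_le_one := mul_laplaceScale_le_one ha hp
  have b_le : b ≤ laplaceScale a p * (1 + b * p) := by
    rw [laplaceScale, div_mul_eq_mul_div, le_div_iff₀ (by positivity)]
    nlinarith
  have common_denominator : laplaceScale a p + laplaceScale b q =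
      (laplaceScale a p * (1 + b * q) + b) / (1 + b * q) := by
    rw [laplaceScale.eq_def b, add_div, mul_div_cancel_right₀ _ (by positivity)]
  rw [common_denominator]
  set σ := laplaceScale a p
  have σbp_nonneg : 0 ≤ σ * (b * p) := by positivity
  have σbq_nonneg : 0 ≤ σ * (b * q) := by positivity
  have σbp_le : b * (p * σ) ≤ b * 1 := by gcongr
  refine ⟨two_pos, by positivity, ?_, ?_⟩
  all_goals
    rw [mul_div_assoc', div_le_div_iff_of_pos_right (by positivity)]
    linarith

lemma comparableWith_laplaceScale_laplaceScale_add (ha : 0 < a) (hb : 0 < b) (hba : b ≤ a)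
    (hp : 0 ≤ p) (hq : 0 ≤ q) :
    ComparableWith 4 (laplaceScale (laplaceScale a p + b) q)
      (a * (1 + b * (p + q)) / ((1 + b * q) * (1 + (a + b) * (p + q)))) := by
  obtain ⟨d, hd, rfl⟩ : ∃ d, 0 ≤ d ∧ a = b + d := ⟨a - b, sub_nonneg.2 hba, by ring⟩
  have nested_scale : laplaceScale (laplaceScale (b + d) p + b) q =
      (b + d + b * (1 + (b + d) * p)) /
        (1 + (b + d) * p + q * (b + d + b * (1 + (b + d) * p))) := by
    unfold laplaceScale; field_simp
  rw [nested_scale]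
  refine ⟨by norm_num, by positivity, ?_, ?_⟩
  all_goals
    rw [mul_div_assoc', div_le_div_iff₀ (by positivity) (by positivity), ← sub_nonneg]
    ring_nf
    positivity

/-- The size of the double integral of `kernelDensity`, as it comes out of integrating over
`0 < s < a` at scale `laplaceScale a p` and over `0 < r < b` at scale `laplaceScale b (p + q)`. -/
noncomputable def kernelMass (k a b p q : ℝ) : ℝ :=
  a ^ (2 * k - 1) * b ^ (k - 1) * laplaceScale a p ^ k * laplaceScale b (p + q) ^ (k + 1) *
    laplaceScale (laplaceScale a p + b) q ^ k * (laplaceScale a p + laplaceScale b q)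

lemma comparableWith_kernelMass (k : ℝ) (ha : 0 < a) (hb : 0 < b) (hba : b ≤ a) (hp : 0 ≤ p)
    (hq : 0 ≤ q) :
    ComparableWith (4 ^ |k| * 2) (kernelMass k a b p q)
      (a ^ (4 * k) * b ^ (2 * k) / ((1 + a * p) ^ (k + 1) * (1 + b * q) ^ (k + 1) *
        (1 + (a + b) * (p + q)) ^ k)) := by
  have σ_pos := laplaceScale_pos ha hp
  have ρ_pos := laplaceScale_pos hb (add_nonneg hp hq)
  have inner_scale :=
    (comparableWith_laplaceScale_laplaceScale_add ha hb hba hp hq).rpow (e := k)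
      (laplaceScale_pos (by positivity) hq) (by positivity)
  have comparison := ((inner_scale.mul
    (comparableWith_laplaceScale_add_laplaceScale ha hb hba hp hq)).const_mul
    (show 0 ≤ a ^ (2 * k - 1) * b ^ (k - 1) * laplaceScale a p ^ k *
      laplaceScale b (p + q) ^ (k + 1) by positivity))
  have a_power : a ^ (4 * k) = a ^ (2 * k - 1) * a ^ k * a ^ k * a := by
    rw [← rpow_add ha, ← rpow_add ha, ← rpow_add_one ha.ne']
    ring_nf
  have b_power : b ^ (2 * k) = b ^ (k - 1) * b ^ (k + 1) := by
    rw [← rpow_add hb]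
    ring_nf
  convert comparison using 1
  · exact mul_assoc _ _ _
  · rw [laplaceScale, laplaceScale, div_rpow ha.le (by positivity), div_rpow hb.le (by positivity),
      div_rpow (by positivity) (by positivity), mul_rpow ha.le (by positivity),
      mul_rpow (by positivity) (by positivity), a_power, b_power,
      rpow_add_one (by positivity), rpow_add_one (by positivity), rpow_add_one (by positivity),
      rpow_add_one (by positivity)]
    field_simp

end ScaleAlgebra

section Model

/-- An elementary function of the size of `kernelDensity`, in which the rank-one kernels are
replaced by their asymptotics. -/
noncomputable def kernelModel (k a b p q r s : ℝ) : ℝ :=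
  a ^ (k - 1) * (s ^ (k - 1) * (a - s) ^ (k - 1) * (r ^ k * (b - r) ^ (k - 1))) *
    exp (-(p * s) - (p + q) * r) * ((s + b) / (1 + q * (s + b - r))) ^ k *
    (a * s + (a - s) * (b - r) / (1 + q * (s + b - r)))

variable {k a b p q r s : ℝ}

lemma exists_comparableWith_kernelModel (hk : 0 < k) :
    ∃ C, 0 < C ∧ ∀ a b p q r s, b ≤ a → 0 ≤ q → r ∈ Set.Ioo 0 b → s ∈ Set.Ioo 0 a →
      ComparableWith C (kernelDensity k a b p q r s) (kernelModel k a b p q r s) := by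
  obtain ⟨C₁, hC₁⟩ := exists_comparableWith_kummerIntegral_one hk (add_pos hk one_pos)
  obtain ⟨C₂, hC₂⟩ := exists_comparableWith_kummerIntegral_one (add_pos hk one_pos) hk
  have C₂_pos : 0 < C₂ := (hC₂ 0 le_rfl).pos
  refine ⟨max (2 * C₁) C₂ * 2 ^ |k - 1|, mul_pos (lt_max_of_lt_right C₂_pos) (by positivity),
    fun a b p q r s hba hq hr hs => ?_⟩
  obtain ⟨hr0, hrb⟩ : 0 < r ∧ 0 < b - r := ⟨hr.1, sub_pos.2 hr.2⟩
  obtain ⟨hs0, hsa⟩ : 0 < s ∧ 0 < a - s := ⟨hs.1, sub_pos.2 hs.2⟩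
  have hb : 0 < b := hr0.trans hr.2
  have ha : 0 < a := hs0.trans hs.2
  have gap_pos : 0 < s + b - r := by linarith
  have gap_pos' : 0 < a + b - r := by linarith
  have argument_nonneg : 0 ≤ q * (s + b - r) := by positivity
  have near_a : ComparableWith 2 (a + b - r) a := ⟨two_pos, ha.le, by linarith, by linarith⟩
  have bracket := ((near_a.const_mul hs0.le).mul (hC₁ _ argument_nonneg)).add
    ((hC₂ _ argument_nonneg).const_mul (mul_pos hsa hrb).le)
  have weight : ComparableWith (2 ^ |k - 1|)
      (((a - s) * (a + b - r) * s * (b - r) * (s + b) * r) ^ (k - 1))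
      (((a - s) * a * s * (b - r) * (s + b) * r) ^ (k - 1)) := by
    refine ComparableWith.rpow ?_ (by positivity) (by positivity) _
    convert near_a.const_mul (show 0 ≤ (a - s) * s * (b - r) * (s + b) * r by positivity)
      using 1 <;> ring
  convert (bracket.mul weight).const_mul
    (show 0 ≤ (s + b) * r * exp (-(p * s) - (p + q) * r) by positivity) using 1
  · unfold kernelDensity; ring
  · have : 1 + q * (s + b - r) ≠ 0 := by positivity
    rw [kernelModel, div_rpow (by positivity) (by positivity), rpow_neg (by positivity),
      rpow_neg (by positivity), rpow_add_one this,
      ← rpow_sub_one_mul_self (show s + b ≠ 0 by positivity) k, ← rpow_sub_one_mul_self hr0.ne' k]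
    iterate 5 rw [mul_rpow (by positivity) (by positivity)]
    field_simp

/-- A dominating function for `kernelModel` whose variables separate. The polynomial growth of
`kernelModel` away from the scales of `p` and `p + q` is paid for with half of these exponents. -/
noncomputable def kernelMajorant (k a b p q r s : ℝ) : ℝ :=
  a ^ (k - 1) * laplaceScale (laplaceScale a p + b) q ^ k *
    (a * (kummerIntegrand (k + 1) k b ((p + q) / 2) r * kummerIntegrand (k + 1) k a (p / 2) s) +
      (1 + b * q)⁻¹ * (kummerIntegrand (k + 1) (k + 1) b ((p + q) / 2) r *
        kummerIntegrand k (k + 1) a (p / 2) s))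

lemma div_one_add_mul_sub_le (hq : 0 ≤ q) (hr : r ∈ Set.Ioo 0 b) (hs : s ∈ Set.Ioo 0 a)
    (hp : 0 ≤ p) :
    (s + b) / (1 + q * (s + b - r)) ≤
      (1 + q * r) * ((1 + (1 + p * s)) * laplaceScale (laplaceScale a p + b) q) := by
  obtain ⟨hr0, hrb⟩ : 0 < r ∧ 0 < b - r := ⟨hr.1, sub_pos.2 hr.2⟩
  have hs0 : 0 < s := hs.1
  have hb : 0 < b := hr0.trans hr.2
  have ha : 0 < a := hs0.trans hs.2
  have σ_pos := laplaceScale_pos ha hp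
  have shifted_le : (s + b) / (1 + q * (s + b - r)) ≤ (1 + q * r) * laplaceScale (s + b) q := by
    have : 0 < s + b - r := by linarith
    have : 0 ≤ q * r * (q * (s + b - r)) := by positivity
    rw [laplaceScale, mul_div_assoc', div_le_div_iff₀ (by positivity) (by positivity)]
    nlinarith
  refine shifted_le.trans (mul_le_mul_of_nonneg_left ?_ (by positivity))
  have ratio_le : s / laplaceScale a p ≤ 1 + p * s := by
    rw [div_laplaceScale ha hp]
    gcongr
    exact (div_le_one ha).2 hs.2.le
  have ps_nonneg : 0 ≤ p * s := by positivity
  refine laplaceScale_le_mul (by positivity) (by positivity) hq (by linarith) ?_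
  rw [div_le_iff₀ σ_pos] at ratio_le
  nlinarith

lemma kernelModel_le_mul_rpow (hk : 0 < k) (hp : 0 ≤ p) (hq : 0 ≤ q) (hr : r ∈ Set.Ioo 0 b)
    (hs : s ∈ Set.Ioo 0 a) :
    kernelModel k a b p q r s ≤
      a ^ (k - 1) * (s ^ (k - 1) * (a - s) ^ (k - 1) * (r ^ k * (b - r) ^ (k - 1))) *
        exp (-(p * s) - (p + q) * r) * laplaceScale (laplaceScale a p + b) q ^ k *
        (1 + (1 + p * s)) ^ k * (1 + q * r) ^ (k + 1) *
        (a * s + (a - s) * (b - r) * (1 + b * q)⁻¹) := by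
  have quotient_le := div_one_add_mul_sub_le hq hr hs hp
  obtain ⟨hr0, hrb⟩ : 0 < r ∧ 0 < b - r := ⟨hr.1, sub_pos.2 hr.2⟩
  obtain ⟨hs0, hsa⟩ : 0 < s ∧ 0 < a - s := ⟨hs.1, sub_pos.2 hs.2⟩
  have hb : 0 < b := hr0.trans hr.2
  have ha : 0 < a := hs0.trans hs.2
  have gap_pos : 0 < s + b - r := by linarith
  have σ_pos := laplaceScale_pos ha hp
  set G := laplaceScale (laplaceScale a p + b) q
  have G_pos : 0 < G := laplaceScale_pos (by positivity) hq
  have inv_le : (1 + q * (s + b - r))⁻¹ ≤ (1 + q * r) * (1 + b * q)⁻¹ := by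
    rw [← div_eq_mul_inv, inv_eq_one_div, div_le_div_iff₀ (by positivity) (by positivity)]
    have : 0 ≤ q * s + q * r * (q * (s + b - r)) := by positivity
    linarith
  have bracket_le : a * s + (a - s) * (b - r) / (1 + q * (s + b - r)) ≤
      (1 + q * r) * (a * s + (a - s) * (b - r) * (1 + b * q)⁻¹) := by
    rw [div_eq_mul_inv]
    have : 0 ≤ q * r * (a * s) := by positivity
    linarith [mul_le_mul_of_nonneg_left inv_le (mul_pos hsa hrb).le]
  calc kernelModel k a b p q r s
      ≤ a ^ (k - 1) * (s ^ (k - 1) * (a - s) ^ (k - 1) * (r ^ k * (b - r) ^ (k - 1))) *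
          exp (-(p * s) - (p + q) * r) * ((1 + q * r) * ((1 + (1 + p * s)) * G)) ^ k *
          ((1 + q * r) * (a * s + (a - s) * (b - r) * (1 + b * q)⁻¹)) := by
        unfold kernelModel; gcongr
    _ = _ := by
        rw [mul_rpow (by positivity) (by positivity), mul_rpow (by positivity) (by positivity),
          rpow_add_one (by positivity)]
        ring

lemma exists_kernelModel_le_kernelMajorant (hk : 0 < k) :
    ∃ C, 0 < C ∧ ∀ a b p q r s, 0 ≤ p → 0 ≤ q → r ∈ Set.Ioo 0 b → s ∈ Set.Ioo 0 a →
      kernelModel k a b p q r s ≤ C * kernelMajorant k a b p q r s := by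
  set C₁ := (2 * k + 1) ^ k * exp (1 / 2)
  set C₂ := (2 * (k + 1) + 1) ^ (k + 1)
  refine ⟨C₁ * C₂, by positivity, fun a b p q r s hp hq hr hs => ?_⟩
  refine (kernelModel_le_mul_rpow hk hp hq hr hs).trans ?_
  obtain ⟨hr0, hrb⟩ : 0 < r ∧ 0 < b - r := ⟨hr.1, sub_pos.2 hr.2⟩
  obtain ⟨hs0, hsa⟩ : 0 < s ∧ 0 < a - s := ⟨hs.1, sub_pos.2 hs.2⟩
  have hb : 0 < b := hr0.trans hr.2
  have ha : 0 < a := hs0.trans hs.2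
  have σ_pos := laplaceScale_pos ha hp
  set G := laplaceScale (laplaceScale a p + b) q with hG
  have G_pos : 0 < G := laplaceScale_pos (by positivity) hq
  have s_growth : (1 + (1 + p * s)) ^ k ≤ C₁ * exp (p / 2 * s) := by
    refine (one_add_rpow_le_exp_half hk (by positivity)).trans_eq ?_
    rw [mul_assoc, ← exp_add]
    ring_nf
  have r_growth : (1 + q * r) ^ (k + 1) ≤ C₂ * exp ((p + q) / 2 * r) := by
    refine (one_add_rpow_le_exp_half (by positivity) (by positivity)).trans ?_
    gcongr
    nlinarith
  set weight := s ^ (k - 1) * (a - s) ^ (k - 1) * (r ^ k * (b - r) ^ (k - 1)) with h_weight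
  set bracket := a * s + (a - s) * (b - r) * (1 + b * q)⁻¹ with h_bracket
  have : 0 < weight := by positivity
  have : 0 < bracket := by positivity
  calc _ ≤ a ^ (k - 1) * weight * exp (-(p * s) - (p + q) * r) * G ^ k *
          (C₁ * exp (p / 2 * s)) * (C₂ * exp ((p + q) / 2 * r)) * bracket := by gcongr
    _ = C₁ * C₂ * kernelMajorant k a b p q r s := by
        have exp_eq : exp (-(p * s) - (p + q) * r) * exp (p / 2 * s) * exp ((p + q) / 2 * r) =
            exp (-(p / 2 * s)) * exp (-((p + q) / 2 * r)) := by
          simp only [← exp_add]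
          ring_nf
        simp only [kernelMajorant, kummerIntegrand, ← hG, add_sub_cancel_right, h_weight,
          h_bracket, ← rpow_sub_one_mul_self hs0.ne' k, ← rpow_sub_one_mul_self hsa.ne' k,
          ← rpow_sub_one_mul_self hrb.ne' k]
        linear_combination C₁ * C₂ * a ^ (k - 1) * (s ^ (k - 1) * (a - s) ^ (k - 1) *
          (r ^ k * (b - r) ^ (k - 1))) * G ^ k * bracket * exp_eq

end Model

section Integration

lemma mul_measureReal_le_setIntegral {X : Type*} [MeasurableSpace X] {μ : Measure X} {S T : Set X}
    {f : X → ℝ} {m : ℝ} (hTS : T ⊆ S) (hS : MeasurableSet S) (hT : MeasurableSet T)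
    (hμT : μ T ≠ ⊤) (hf : IntegrableOn f S μ) (hf_nonneg : ∀ x ∈ S, 0 ≤ f x)
    (hm : ∀ x ∈ T, m ≤ f x) : m * μ.real T ≤ ∫ x in S, f x ∂μ :=
  (setIntegral_ge_of_const_le_real hT hμT hm (hf.mono_set hTS)).trans
    (setIntegral_mono_set hf (ae_restrict_of_forall_mem hS hf_nonneg) hTS.eventuallyLE)

lemma integral_integral_eq_setIntegral_prod {f : ℝ × ℝ → ℝ} {a b : ℝ} (ha : 0 ≤ a) (hb : 0 ≤ b)
    (hf : IntegrableOn f (Set.Ioo 0 b ×ˢ Set.Ioo 0 a)) :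
    ∫ r in (0 : ℝ)..b, ∫ s in (0 : ℝ)..a, f (r, s) =
      ∫ z in Set.Ioo 0 b ×ˢ Set.Ioo 0 a, f z := by
  rw [Measure.volume_eq_prod] at hf ⊢
  simp only [intervalIntegral.integral_of_le, ha, hb, integral_Ioc_eq_integral_Ioo,
    setIntegral_prod f hf]

lemma integrableOn_kummerIntegrand {u w a : ℝ} (p : ℝ) (hu : 0 < u) (hw : 0 < w) (ha : 0 < a) :
    IntegrableOn (kummerIntegrand u w a p) (Set.Ioo 0 a) :=
  (intervalIntegrable_iff_integrableOn_Ioo_of_le ha.le).1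
    (intervalIntegrable_kummerIntegrand p hu hw ha)

lemma setIntegral_kummerIntegrand {a : ℝ} (u w p : ℝ) (ha : 0 ≤ a) :
    ∫ s in Set.Ioo 0 a, kummerIntegrand u w a p s = kummerIntegral u w a p := by
  rw [kummerIntegral, intervalIntegral.integral_of_le ha, integral_Ioc_eq_integral_Ioo]

variable {k a b : ℝ}

lemma integrableOn_kummerIntegrand_mul {u w u' w' : ℝ} (p p' : ℝ) (hu : 0 < u) (hw : 0 < w)
    (hu' : 0 < u') (hw' : 0 < w') (ha : 0 < a) (hb : 0 < b) :
    IntegrableOn (fun z : ℝ × ℝ => kummerIntegrand u w b p z.1 * kummerIntegrand u' w' a p' z.2)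
      (Set.Ioo 0 b ×ˢ Set.Ioo 0 a) := by
  rw [IntegrableOn, Measure.volume_eq_prod, ← Measure.prod_restrict]
  exact (integrableOn_kummerIntegrand p hu hw hb).mul_prod
    (integrableOn_kummerIntegrand p' hu' hw' ha)

lemma setIntegral_kummerIntegrand_mul (u w u' w' p p' : ℝ) (ha : 0 ≤ a) (hb : 0 ≤ b) :
    ∫ z in Set.Ioo 0 b ×ˢ Set.Ioo 0 a,
        kummerIntegrand u w b p z.1 * kummerIntegrand u' w' a p' z.2 =
      kummerIntegral u w b p * kummerIntegral u' w' a p' := by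
  rw [Measure.volume_eq_prod, setIntegral_prod_mul, setIntegral_kummerIntegrand _ _ _ hb,
    setIntegral_kummerIntegrand _ _ _ ha]

lemma integrableOn_kernelMajorant (p q : ℝ) (hk : 0 < k) (ha : 0 < a) (hb : 0 < b) :
    IntegrableOn (fun z : ℝ × ℝ => kernelMajorant k a b p q z.1 z.2)
      (Set.Ioo 0 b ×ˢ Set.Ioo 0 a) := by
  have hk1 : 0 < k + 1 := by positivity
  exact (((integrableOn_kummerIntegrand_mul _ _ hk1 hk hk1 hk ha hb).const_mul a).add
    ((integrableOn_kummerIntegrand_mul _ _ hk1 hk1 hk hk1 ha hb).const_mul _)).const_mul _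

lemma setIntegral_kernelMajorant (p q : ℝ) (hk : 0 < k) (ha : 0 < a) (hb : 0 < b) :
    ∫ z in Set.Ioo 0 b ×ˢ Set.Ioo 0 a, kernelMajorant k a b p q z.1 z.2 =
      a ^ (k - 1) * laplaceScale (laplaceScale a p + b) q ^ k *
        (a * (kummerIntegral (k + 1) k b ((p + q) / 2) * kummerIntegral (k + 1) k a (p / 2)) +
          (1 + b * q)⁻¹ * (kummerIntegral (k + 1) (k + 1) b ((p + q) / 2) *
            kummerIntegral k (k + 1) a (p / 2))) := by
  have hk1 : 0 < k + 1 := by positivity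
  unfold kernelMajorant
  rw [integral_const_mul, integral_add
      ((integrableOn_kummerIntegrand_mul _ _ hk1 hk hk1 hk ha hb).const_mul a)
      ((integrableOn_kummerIntegrand_mul _ _ hk1 hk1 hk hk1 ha hb).const_mul _),
    integral_const_mul, integral_const_mul, setIntegral_kummerIntegrand_mul _ _ _ _ _ _ ha.le hb.le,
    setIntegral_kummerIntegrand_mul _ _ _ _ _ _ ha.le hb.le]

lemma exists_setIntegral_kernelMajorant_le (hk : 0 < k) :
    ∃ C, 0 < C ∧ ∀ a b p q, 0 < a → 0 < b → 0 ≤ p → 0 ≤ q →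
      ∫ z in Set.Ioo 0 b ×ˢ Set.Ioo 0 a, kernelMajorant k a b p q z.1 z.2 ≤
        C * kernelMass k a b p q := by
  have hk1 : 0 < k + 1 := by positivity
  obtain ⟨C₁, hC₁, bound₁⟩ := exists_kummerIntegral_half_le hk1 hk
  obtain ⟨C₂, hC₂, bound₂⟩ := exists_kummerIntegral_half_le hk1 hk1
  obtain ⟨C₃, hC₃, bound₃⟩ := exists_kummerIntegral_half_le hk hk1
  refine ⟨C₁ * C₁ + C₂ * C₃, by positivity, fun a b p q ha hb hp hq => ?_⟩
  have hpq := add_nonneg hp hq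
  have σ_pos := laplaceScale_pos ha hp
  have ρ_pos := laplaceScale_pos hb hpq
  have G_pos : 0 < laplaceScale (laplaceScale a p + b) q := laplaceScale_pos (by positivity) hq
  have kummer_nonneg (u w p : ℝ) : 0 ≤ kummerIntegral u w a p :=
    intervalIntegral.integral_nonneg ha.le fun s hs => kummerIntegrand_nonneg hs
  set σ := laplaceScale a p
  set ρ := laplaceScale b (p + q)
  set G := laplaceScale (σ + b) q
  have a_power : a ^ (2 * k - 1) = a ^ (k - 1) * a ^ k := by rw [← rpow_add ha]; ring_nf
  calc _ ≤ a ^ (k - 1) * G ^ k *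
          (a * ((C₁ * (b ^ (k - 1) * ρ ^ (k + 1))) * (C₁ * (a ^ (k - 1) * σ ^ (k + 1)))) +
            (1 + b * q)⁻¹ * ((C₂ * (b ^ (k + 1 - 1) * ρ ^ (k + 1))) *
              (C₃ * (a ^ (k + 1 - 1) * σ ^ k)))) := by
        rw [setIntegral_kernelMajorant p q hk ha hb]
        gcongr
        · exact kummer_nonneg _ _ _
        · exact bound₁ b _ hb hpq
        · exact bound₁ a p ha hp
        · exact kummer_nonneg _ _ _
        · exact bound₂ b _ hb hpq
        · exact bound₃ a p ha hp
    _ = a ^ (2 * k - 1) * b ^ (k - 1) * σ ^ k * ρ ^ (k + 1) * G ^ k *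
          (C₁ * C₁ * σ + C₂ * C₃ * laplaceScale b q) := by
        rw [a_power, add_sub_cancel_right, rpow_add_one σ_pos.ne', laplaceScale.eq_def b q,
          ← rpow_sub_one_mul_self ha.ne' k, ← rpow_sub_one_mul_self hb.ne' k]
        ring
    _ ≤ a ^ (2 * k - 1) * b ^ (k - 1) * σ ^ k * ρ ^ (k + 1) * G ^ k *
          ((C₁ * C₁ + C₂ * C₃) * (σ + laplaceScale b q)) := by
        have := laplaceScale_pos hb hq
        have : 0 ≤ C₁ * C₁ * laplaceScale b q + C₂ * C₃ * σ := by positivity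
        gcongr
        linarith
    _ = _ := by unfold kernelMass; ring

end Integration

section Window

variable {a b p q : ℝ}

/-- The size of `kernelModel` for `s` of order `σ` and `r` of order `ρ`, when `σ` and `ρ` do not
exceed the scales of `p` and `p + q`. -/
noncomputable def kernelModelAtScale (k a b q σ ρ : ℝ) : ℝ :=
  a ^ (k - 1) * (σ ^ (k - 1) * a ^ (k - 1) * (ρ ^ k * b ^ (k - 1))) *
    laplaceScale (σ + b) q ^ k * (a * σ + a * b / (1 + q * (σ + b)))

lemma exists_comparableWith_kernelModelAtScale (k : ℝ) :
    ∃ C, 0 < C ∧ ∀ a b p q r s σ ρ, 0 < σ → 0 < ρ → σ ≤ a → ρ ≤ b → 0 ≤ p → 0 ≤ q → p * σ ≤ 1 →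
      (p + q) * ρ ≤ 1 → r ∈ Set.Icc (ρ / 4) (ρ / 2) → s ∈ Set.Icc (σ / 4) (σ / 2) →
      ComparableWith C (kernelModel k a b p q r s) (kernelModelAtScale k a b q σ ρ) := by
  refine ⟨4 ^ |k - 1| * 2 ^ |k - 1| * (4 ^ |k| * 2 ^ |k - 1|) * exp 1 * (4 * 4) ^ |k| *
    max 4 (2 * 2 * 4), by positivity,
    fun a b p q r s σ ρ hσ hρ hσa hρb hp hq hpσ hpqρ hr hs => ?_⟩
  obtain ⟨s_ge, s_le⟩ := hs
  obtain ⟨r_ge, r_le⟩ := hr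
  have ha : 0 < a := hσ.trans_le hσa
  have hb : 0 < b := hρ.trans_le hρb
  have hs0 : 0 < s := by linarith
  have hr0 : 0 < r := by linarith
  have hsa : 0 < a - s := by linarith
  have hrb : 0 < b - r := by linarith
  have gap_pos : 0 < s + b - r := by linarith
  have s_near : ComparableWith 4 s σ := ⟨by norm_num, hσ.le, by linarith, by linarith⟩
  have r_near : ComparableWith 4 r ρ := ⟨by norm_num, hρ.le, by linarith, by linarith⟩
  have as_near : ComparableWith 2 (a - s) a := ⟨two_pos, ha.le, by linarith, by linarith⟩
  have br_near : ComparableWith 2 (b - r) b := ⟨two_pos, hb.le, by linarith, by linarith⟩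
  have sb_near : ComparableWith 4 (s + b) (σ + b) :=
    ⟨by norm_num, by positivity, by linarith, by linarith⟩
  have denominator_near : ComparableWith 4 (1 + q * (s + b - r)) (1 + q * (σ + b)) :=
    ⟨by norm_num, by positivity, by nlinarith, by nlinarith⟩
  have exp_near : ComparableWith (exp 1) (exp (-(p * s) - (p + q) * r)) 1 := by
    refine ⟨exp_pos _, zero_le_one, ?_, ?_⟩
    · rw [mul_one, exp_le_exp]
      have : 0 ≤ p * s + (p + q) * r := by positivity
      linarith
    · rw [← exp_add, one_le_exp_iff]
      nlinarith
  have quotient_near := (sb_near.div denominator_near (by positivity) (by positivity)).rpow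
    (by positivity) (by positivity) k
  have bracket_near := (s_near.const_mul ha.le).add
    ((as_near.mul br_near).div denominator_near (by positivity) (by positivity))
  have weight_near := ((s_near.rpow hs0 hσ (k - 1)).mul (as_near.rpow hsa ha (k - 1))).mul
    ((r_near.rpow hr0 hρ k).mul (br_near.rpow hrb hb (k - 1)))
  have comparison := (((weight_near.const_mul (rpow_nonneg ha.le (k - 1))).mul exp_near).mul
    quotient_near).mul bracket_near
  simpa only [mul_one, kernelModel, kernelModelAtScale, laplaceScale, mul_comm (σ + b) q]
    using comparison

lemma kernelMass_le_mul_kernelModelAtScale (k : ℝ) (ha : 0 < a) (hb : 0 < b) (hp : 0 ≤ p)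
    (hq : 0 ≤ q) :
    kernelMass k a b p q ≤ 2 * (laplaceScale a p * laplaceScale b (p + q) *
      kernelModelAtScale k a b q (laplaceScale a p) (laplaceScale b (p + q))) := by
  have σ_pos := laplaceScale_pos ha hp
  have ρ_pos := laplaceScale_pos hb (add_nonneg hp hq)
  have scale_le := laplaceScale_le_add_div hb hq σ_pos.le
  unfold kernelMass kernelModelAtScale
  set σ := laplaceScale a p
  set ρ := laplaceScale b (p + q)
  have G_pos : 0 < laplaceScale (σ + b) q := laplaceScale_pos (by positivity) hq
  set G := laplaceScale (σ + b) q
  have a_power : a ^ (2 * k - 1) = a ^ (k - 1) * a ^ (k - 1) * a := by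
    rw [← rpow_add ha, ← rpow_add_one ha.ne']
    ring_nf
  calc a ^ (2 * k - 1) * b ^ (k - 1) * σ ^ k * ρ ^ (k + 1) * G ^ k * (σ + laplaceScale b q)
      ≤ a ^ (2 * k - 1) * b ^ (k - 1) * σ ^ k * ρ ^ (k + 1) * G ^ k *
          (2 * (σ + b / (1 + q * (σ + b)))) := by
        gcongr
        have : 0 < b / (1 + q * (σ + b)) := by positivity
        linarith
    _ = _ := by
        rw [a_power, rpow_add_one ρ_pos.ne', ← rpow_sub_one_mul_self σ_pos.ne' k]
        ring

end Window

section DoubleIntegral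

variable {k a b p q : ℝ}

lemma kernelDensity_nonneg {r s : ℝ} (p : ℝ) (hk : 0 < k) (hba : b ≤ a) (hq : 0 ≤ q)
    (hr : r ∈ Set.Ioo 0 b) (hs : s ∈ Set.Ioo 0 a) : 0 ≤ kernelDensity k a b p q r s := by
  obtain ⟨C, -, hC⟩ := exists_comparableWith_kernelModel hk
  exact (hC a b p q r s hba hq hr hs).left_nonneg

lemma exists_kernelDensity_le_kernelMajorant (hk : 0 < k) :
    ∃ C, 0 < C ∧ ∀ a b p q r s, b ≤ a → 0 ≤ p → 0 ≤ q → r ∈ Set.Ioo 0 b → s ∈ Set.Ioo 0 a →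
      kernelDensity k a b p q r s ≤ C * kernelMajorant k a b p q r s := by
  obtain ⟨C, C_pos, hC⟩ := exists_comparableWith_kernelModel hk
  obtain ⟨D, hD, model_le⟩ := exists_kernelModel_le_kernelMajorant hk
  refine ⟨C * D, by positivity, fun a b p q r s hba hp hq hr hs => ?_⟩
  refine (hC a b p q r s hba hq hr hs).le.trans ?_
  rw [mul_assoc]
  exact mul_le_mul_of_nonneg_left (model_le a b p q r s hp hq hr hs) C_pos.le

lemma integrableOn_kernelDensity (hk : 0 < k) (hb : 0 < b) (hba : b ≤ a) (hp : 0 ≤ p)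
    (hq : 0 ≤ q) :
    IntegrableOn (fun z : ℝ × ℝ => kernelDensity k a b p q z.1 z.2)
      (Set.Ioo 0 b ×ˢ Set.Ioo 0 a) := by
  obtain ⟨C, -, bound⟩ := exists_kernelDensity_le_kernelMajorant hk
  refine ((integrableOn_kernelMajorant p q hk (hb.trans_le hba) hb).const_mul C).mono'
    (measurable_kernelDensity k a b p q).aestronglyMeasurable ?_
  filter_upwards [ae_restrict_mem (measurableSet_Ioo.prod measurableSet_Ioo)] with z hz
  rw [norm_of_nonneg (kernelDensity_nonneg p hk hba hq hz.1 hz.2)]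
  exact bound a b p q z.1 z.2 hba hp hq hz.1 hz.2

lemma exists_setIntegral_kernelDensity_le (hk : 0 < k) :
    ∃ C, 0 < C ∧ ∀ a b p q, 0 < b → b ≤ a → 0 ≤ p → 0 ≤ q →
      ∫ z in Set.Ioo 0 b ×ˢ Set.Ioo 0 a, kernelDensity k a b p q z.1 z.2 ≤
        C * kernelMass k a b p q := by
  obtain ⟨C, hC, bound⟩ := exists_kernelDensity_le_kernelMajorant hk
  obtain ⟨D, hD, majorant_le⟩ := exists_setIntegral_kernelMajorant_le hk
  refine ⟨C * D, by positivity, fun a b p q hb hba hp hq => ?_⟩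
  have ha := hb.trans_le hba
  calc ∫ z in Set.Ioo 0 b ×ˢ Set.Ioo 0 a, kernelDensity k a b p q z.1 z.2
      ≤ ∫ z in Set.Ioo 0 b ×ˢ Set.Ioo 0 a, C * kernelMajorant k a b p q z.1 z.2 :=
        setIntegral_mono_on (integrableOn_kernelDensity hk hb hba hp hq)
          ((integrableOn_kernelMajorant p q hk ha hb).const_mul C)
          (measurableSet_Ioo.prod measurableSet_Ioo)
          fun z hz => bound a b p q z.1 z.2 hba hp hq hz.1 hz.2
    _ ≤ C * D * kernelMass k a b p q := by
        rw [integral_const_mul, mul_assoc]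
        exact mul_le_mul_of_nonneg_left (majorant_le a b p q ha hb hp hq) hC.le

lemma exists_kernelMass_le_kernelDensity (hk : 0 < k) :
    ∃ C, 0 < C ∧ ∀ a b p q r s, 0 < b → b ≤ a → 0 ≤ p → 0 ≤ q →
      r ∈ Set.Icc (laplaceScale b (p + q) / 4) (laplaceScale b (p + q) / 2) →
      s ∈ Set.Icc (laplaceScale a p / 4) (laplaceScale a p / 2) →
      kernelMass k a b p q ≤
        C * (laplaceScale a p * laplaceScale b (p + q)) * kernelDensity k a b p q r s := by
  obtain ⟨C, C_pos, hC⟩ := exists_comparableWith_kernelModel hk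
  obtain ⟨D, D_pos, hD⟩ := exists_comparableWith_kernelModelAtScale k
  refine ⟨2 * (C * D), by positivity, fun a b p q r s hb hba hp hq hr hs => ?_⟩
  have ha := hb.trans_le hba
  have hpq := add_nonneg hp hq
  have σ_pos := laplaceScale_pos ha hp
  have ρ_pos := laplaceScale_pos hb hpq
  have σ_le := laplaceScale_le_self ha hp
  have ρ_le := laplaceScale_le_self hb hpq
  have comparison := (hC a b p q r s hba hq
    (Set.Icc_subset_Ioo (by positivity) (by linarith) hr)
    (Set.Icc_subset_Ioo (by positivity) (by linarith) hs)).trans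
    (hD a b p q r s _ _ σ_pos ρ_pos σ_le ρ_le hp hq (mul_laplaceScale_le_one ha hp)
      (mul_laplaceScale_le_one hb hpq) hr hs)
  calc kernelMass k a b p q
      ≤ 2 * (laplaceScale a p * laplaceScale b (p + q) *
          kernelModelAtScale k a b q (laplaceScale a p) (laplaceScale b (p + q))) :=
        kernelMass_le_mul_kernelModelAtScale k ha hb hp hq
    _ ≤ 2 * (laplaceScale a p * laplaceScale b (p + q) *
          (C * D * kernelDensity k a b p q r s)) := by
        gcongr
        exact comparison.ge
    _ = _ := by ring

lemma exists_kernelMass_le_setIntegral_kernelDensity (hk : 0 < k) :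
    ∃ C, 0 < C ∧ ∀ a b p q, 0 < b → b ≤ a → 0 ≤ p → 0 ≤ q →
      kernelMass k a b p q ≤
        C * ∫ z in Set.Ioo 0 b ×ˢ Set.Ioo 0 a, kernelDensity k a b p q z.1 z.2 := by
  obtain ⟨C, hC, mass_le⟩ := exists_kernelMass_le_kernelDensity hk
  refine ⟨16 * C, by positivity, fun a b p q hb hba hp hq => ?_⟩
  have ha := hb.trans_le hba
  have hpq := add_nonneg hp hq
  have σ_pos := laplaceScale_pos ha hp
  have ρ_pos := laplaceScale_pos hb hpq
  have σ_le := laplaceScale_le_self ha hp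
  have ρ_le := laplaceScale_le_self hb hpq
  specialize mass_le a b p q
  set σ := laplaceScale a p
  set ρ := laplaceScale b (p + q)
  have window_subset : Set.Icc (ρ / 4) (ρ / 2) ×ˢ Set.Icc (σ / 4) (σ / 2) ⊆
      Set.Ioo 0 b ×ˢ Set.Ioo 0 a :=
    Set.prod_mono (Set.Icc_subset_Ioo (by positivity) (by linarith))
      (Set.Icc_subset_Ioo (by positivity) (by linarith))
  have window_volume :
      volume.real (Set.Icc (ρ / 4) (ρ / 2) ×ˢ Set.Icc (σ / 4) (σ / 2)) = σ * ρ / 16 := by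
    rw [Measure.volume_eq_prod, measureReal_prod_prod, volume_real_Icc_of_le (by linarith),
      volume_real_Icc_of_le (by linarith)]
    ring
  have lower := mul_measureReal_le_setIntegral (m := kernelMass k a b p q / (C * (σ * ρ)))
    window_subset (measurableSet_Ioo.prod measurableSet_Ioo)
    (measurableSet_Icc.prod measurableSet_Icc) (isCompact_Icc.prod isCompact_Icc).measure_ne_top
    (integrableOn_kernelDensity hk hb hba hp hq)
    (fun z hz => kernelDensity_nonneg p hk hba hq hz.1 hz.2)
    fun z hz => (div_le_iff₀' (by positivity)).2 (mass_le z.1 z.2 hb hba hp hq hz.1 hz.2)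
  calc kernelMass k a b p q
      = 16 * C * (kernelMass k a b p q / (C * (σ * ρ)) * (σ * ρ / 16)) := by field_simp
    _ ≤ _ := by rw [← window_volume]; gcongr

lemma exists_comparableWith_integral_kernelDensity (hk : 0 < k) :
    ∃ C, 0 < C ∧ ∀ a b p q, 0 < b → b ≤ a → 0 ≤ p → 0 ≤ q →
      ComparableWith C (∫ r in (0 : ℝ)..b, ∫ s in (0 : ℝ)..a, kernelDensity k a b p q r s)
        (a ^ (4 * k) * b ^ (2 * k) / ((1 + a * p) ^ (k + 1) * (1 + b * q) ^ (k + 1) *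
          (1 + (a + b) * (p + q)) ^ k)) := by
  obtain ⟨C, hC, integral_le⟩ := exists_setIntegral_kernelDensity_le hk
  obtain ⟨D, -, le_integral⟩ := exists_kernelMass_le_setIntegral_kernelDensity hk
  refine ⟨max C D * (4 ^ |k| * 2), mul_pos (lt_max_of_lt_left hC) (by positivity),
    fun a b p q hb hba hp hq => ?_⟩
  have ha := hb.trans_le hba
  have mass_comparison := comparableWith_kernelMass k ha hb hba hp hq
  rw [integral_integral_eq_setIntegral_prod (f := fun z => kernelDensity k a b p q z.1 z.2) ha.le
    hb.le (integrableOn_kernelDensity hk hb hba hp hq)]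
  refine ComparableWith.trans ⟨lt_max_of_lt_left hC, mass_comparison.left_nonneg, ?_, ?_⟩
    mass_comparison
  · exact (integral_le a b p q hb hba hp hq).trans
      (mul_le_mul_of_nonneg_right (le_max_left C D) mass_comparison.left_nonneg)
  · exact (le_integral a b p q hb hba hp hq).trans
      (mul_le_mul_of_nonneg_right (le_max_right C D) (setIntegral_nonneg
        (measurableSet_Ioo.prod measurableSet_Ioo)
        fun z hz => kernelDensity_nonneg p hk hba hq hz.1 hz.2))

end DoubleIntegral

section Estimate

lemma Vlam_pos {l1 l2 l3 : ℝ} (hα : l2 < l1) (hβ : l3 < l2) : 0 < Vlam l1 l2 l3 :=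
  mul_pos (mul_pos (sub_pos.2 hα) (sub_pos.2 (hβ.trans hα))) (sub_pos.2 hβ)

lemma comparableWith_Vlam_rpow {l1 l2 l3 : ℝ} (k : ℝ) (hα : l2 < l1) (hβ : l3 < l2)
    (hβα : l2 - l3 ≤ l1 - l2) :
    ComparableWith (2 ^ |2 * k|) (Vlam l1 l2 l3 ^ (2 * k))
      ((l1 - l2) ^ (4 * k) * (l2 - l3) ^ (2 * k)) := by
  have α_pos : 0 < l1 - l2 := sub_pos.2 hα
  have β_pos : 0 < l2 - l3 := sub_pos.2 hβ
  have γ_near : ComparableWith 2 (l1 - l3) (l1 - l2) :=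
    ⟨two_pos, α_pos.le, by linarith, by linarith⟩
  have V_near : ComparableWith 2 (Vlam l1 l2 l3) ((l1 - l2) ^ 2 * (l2 - l3)) := by
    convert γ_near.const_mul (mul_pos α_pos β_pos).le using 1
    · unfold Vlam; ring
    · ring
  convert V_near.rpow (Vlam_pos hα hβ) (by positivity) (2 * k) using 1
  rw [mul_rpow (by positivity) β_pos.le, ← rpow_natCast_mul α_pos.le]
  congr 2
  push_cast
  ring

theorem estimate_C312_case1_general (k : ℝ) (hk : 0 < k) :
    ∃ C : ℝ, 0 < C ∧ ∀ l1 l2 l3 x1 x2 x3 : ℝ, l1 + l2 + l3 = 0 → l2 < l1 → l3 < l2 →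
      x1 ≤ x3 → x2 ≤ x1 → l2 - l3 ≤ l1 - l2 →
      ComparableWith C (EkA2 k x1 x2 x3 l1 l2 l3)
        (exp (l1 * x3 + l2 * x1 + l3 * x2) /
          ((1 + (l1 - l2) * (x3 - x1)) ^ (k + 1) * (1 + (l2 - l3) * (x1 - x2)) ^ (k + 1)
            * (1 + (l1 - l3) * (x3 - x2)) ^ k)) := by
  obtain ⟨C, C_pos, hC⟩ := exists_comparableWith_integral_kernelDensity hk
  have K_pos : 0 < 3 * Gamma (3 * k) / Gamma k ^ 2 * rankOneConst k := by
    have := rankOneConst_pos hk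
    positivity
  set K := 3 * Gamma (3 * k) / Gamma k ^ 2 * rankOneConst k with K_def
  refine ⟨max K K⁻¹ * (C * 2 ^ |2 * k|), mul_pos (lt_max_of_lt_left K_pos) (by positivity),
    fun l1 l2 l3 x1 x2 x3 hl hα hβ hx hx' hβα => ?_⟩
  have α_pos : 0 < l1 - l2 := sub_pos.2 hα
  have β_pos : 0 < l2 - l3 := sub_pos.2 hβ
  have V_pos := Vlam_pos hα hβ
  have quotient_near := (hC (l1 - l2) (l2 - l3) (x3 - x1) (x1 - x2) β_pos hβα (sub_nonneg.2 hx)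
    (sub_nonneg.2 hx')).div (comparableWith_Vlam_rpow k hα hβ hβα) (by positivity) (by positivity)
  convert ((ComparableWith.one_right K_pos).mul quotient_near).const_mul
    (exp_pos (l1 * x3 + l2 * x1 + l3 * x2)).le using 1
  · rw [EkA2_eq_exp_mul_integral_kernelDensity k x1 x2 x3 hl, K_def]
    ring
  · rw [sub_add_sub_cancel l1 l2 l3, sub_add_sub_cancel x3 x1 x2]
    field_simp

end Estimate

/-- Theorem 4.1: sharp estimate of the `A₂` Dunkl kernel. -/
theorem estimate_C312_case1 (k : ℝ) (hk : 0 < k) :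
    ∃ C : ℝ, 0 < C ∧ ∀ l1 l2 l3 x1 x2 x3 : ℝ,
      l1 + l2 + l3 = 0 →
      l2 < l1 →
      l3 < l2 →
      x1 + x2 + x3 = 0 →
      x1 ≤ x3 →
      x2 ≤ x1 →
      l2 - l3 ≤ l1 - l2 →
      (C⁻¹ * (Real.exp (l1 * x3 + l2 * x1 + l3 * x2) /
          ((1 + (l1 - l2) * (x3 - x1)) ^ (k + 1) * (1 + (l2 - l3) * (x1 - x2)) ^ (k + 1)
            * (1 + (l1 - l3) * (x3 - x2)) ^ k))
        ≤ EkA2 k x1 x2 x3 l1 l2 l3 ∧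
      EkA2 k x1 x2 x3 l1 l2 l3
        ≤ C * (Real.exp (l1 * x3 + l2 * x1 + l3 * x2) /
          ((1 + (l1 - l2) * (x3 - x1)) ^ (k + 1) * (1 + (l2 - l3) * (x1 - x2)) ^ (k + 1)
            * (1 + (l1 - l3) * (x3 - x2)) ^ k))) := by
  obtain ⟨C, C_pos, hC⟩ := estimate_C312_case1_general k hk
  exact ⟨C, C_pos, fun l1 l2 l3 x1 x2 x3 hl hα hβ _ hx hx' hβα =>
    have h := hC l1 l2 l3 x1 x2 x3 hl hα hβ hx hx' hβα; ⟨h.inv_mul_le, h.le⟩⟩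
end

section
/- (Theorem 4.1(iv), second case.) Uniformly over all λ ∈ C⁺ and all X ∈ a with x3 ≥ x1 ≥ x2 such that β_λ ≥ α_λ and α_λ α_{X⁺} ≥ β_λ β_{X⁺}, one has E_k(X,λ) ≍ e^{⟨λ,X⁺⟩} / [ (1+α_λ α_{X⁺})^{k} (1+β_λ β_{X⁺})^{k+1} (1+γ_λ γ_{X⁺})^{k+1} ]. -/
open Real MeasureTheory

/-!
In the coordinates `s = ν₁ - λ₂`, `t = ν₂ - λ₃` the growth `e^{⟨λ, X⁺⟩}` factors out of the integral
exactly, and the two rank-one kernels become Laplace transforms of beta densities, for which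
`∫₀ᴸ u ^ (m - 1) (L - u) ^ (n - 1) e^{-yu} du ≍ L ^ (m + n - 1) (1 + L y) ^ (-m)`.

The kernels couple `s` and `t` through `v = ν₁ - ν₂ = s + β_λ - t`. Since `α_λ ≤ β_λ`, from above
`v` may be replaced by `β_λ` at the cost of half of the exponential decay in `t`, because
`1 + b β_λ ≤ (1 + b v) (1 + b t)` for `b = β_{X⁺}`; from below one uses `v ≤ 2 β_λ`. The double
integral is thereby squeezed between products of one-dimensional beta–Laplace integrals.

The two kernels contribute `1 / (1 + α_λ α_{X⁺})` and `1 / (1 + β_λ β_{X⁺})` respectively. Their sum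
is comparable to `1 / (1 + min (α_λ α_{X⁺}) (β_λ β_{X⁺}))`, whichever of the two is larger.
-/

section Elementary

lemma rpow_mem_Icc_of_le_one {δ w : ℝ} (hδ : 0 < δ) (hδw : δ ≤ w) (hw : w ≤ 1) (r : ℝ) :
    w ^ r ∈ Set.Icc (δ ^ |r|) (δ ^ (-|r|)) := by
  have hw0 : 0 < w := hδ.trans_le hδw
  constructor
  · calc δ ^ |r| ≤ w ^ |r| := rpow_le_rpow hδ.le hδw (abs_nonneg r)
      _ ≤ w ^ r := rpow_le_rpow_of_exponent_ge hw0 hw (le_abs_self r)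
  · calc w ^ r ≤ w ^ (-|r|) := rpow_le_rpow_of_exponent_ge hw0 hw (neg_abs_le r)
      _ ≤ δ ^ (-|r|) := rpow_le_rpow_of_nonpos hδ hδw (neg_nonpos.2 (abs_nonneg r))

lemma rpow_neg_le_mul_rpow_neg {x y M r : ℝ} (hr : 0 ≤ r) (hy : 0 < y) (hM : 0 < M)
    (h : y ≤ M * x) : x ^ (-r) ≤ M ^ r * y ^ (-r) := by
  have hx : 0 < x := pos_of_mul_pos_right (hy.trans_le h) hM.le
  calc x ^ (-r) = M ^ r * (M * x) ^ (-r) := by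
        rw [mul_rpow hM.le hx.le, ← mul_assoc, ← rpow_add hM, add_neg_cancel, rpow_zero, one_mul]
    _ ≤ M ^ r * y ^ (-r) :=
        mul_le_mul_of_nonneg_left (rpow_le_rpow_of_nonpos hy h (neg_nonpos.2 hr)) (by positivity)

lemma one_add_rpow_le_mul_exp {r c y : ℝ} (hr : 0 < r) (hc : 0 < c) (hy : 0 ≤ y) :
    (1 + y) ^ r ≤ (1 + r / c) ^ r * exp (c * y) := by
  have hbase : 1 + y ≤ (1 + r / c) * exp (c * y / r) :=
    calc 1 + y ≤ (1 + y) + (r / c + c * y / r) := le_add_of_nonneg_right (by positivity)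
      _ = (1 + r / c) * (c * y / r + 1) := by field_simp; ring
      _ ≤ (1 + r / c) * exp (c * y / r) := by gcongr; exact add_one_le_exp _
  calc (1 + y) ^ r ≤ ((1 + r / c) * exp (c * y / r)) ^ r := by gcongr
    _ = (1 + r / c) ^ r * exp (c * y) := by
        rw [mul_rpow (by positivity) (exp_pos _).le, ← exp_mul, div_mul_cancel₀ _ hr.ne']

lemma one_div_one_add_add_le {x y : ℝ} (hx : 0 ≤ x) (hy : 0 ≤ y) :
    1 / (1 + x) + 1 / (1 + y) ≤ 2 / (1 + min x y) := by
  have := le_min hx hy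
  calc 1 / (1 + x) + 1 / (1 + y) ≤ 1 / (1 + min x y) + 1 / (1 + min x y) := by
        gcongr
        exacts [min_le_left x y, min_le_right x y]
    _ = 2 / (1 + min x y) := by ring

lemma one_div_one_add_min_le {x y : ℝ} (hx : 0 ≤ x) (hy : 0 ≤ y) :
    1 / (1 + min x y) ≤ 1 / (1 + x) + 1 / (1 + y) := by
  rcases min_choice x y with h | h <;> rw [h]
  exacts [le_add_of_nonneg_right (by positivity), le_add_of_nonneg_left (by positivity)]

end Elementary

lemma integral_mul_integral_bounds {f : ℝ → ℝ → ℝ} {g₁ g₂ h₁ h₂ : ℝ → ℝ} {a b c d : ℝ}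
    (hab : a ≤ b) (hcd : c ≤ d) (hf : Measurable (Function.uncurry f))
    (hg₁ : IntervalIntegrable g₁ volume c d) (hg₂ : IntervalIntegrable g₂ volume c d)
    (hh₁ : IntervalIntegrable h₁ volume a b) (hh₂ : IntervalIntegrable h₂ volume a b)
    (hlower : ∀ t ∈ Set.Ioo a b, ∀ s ∈ Set.Ioo c d, h₁ t * g₁ s ≤ f t s)
    (hupper : ∀ t ∈ Set.Ioo a b, ∀ s ∈ Set.Ioo c d, f t s ≤ h₂ t * g₂ s) :
    (∫ t in a..b, ∫ s in c..d, f t s) ∈ Set.Icc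
      ((∫ t in a..b, h₁ t) * ∫ s in c..d, g₁ s) ((∫ t in a..b, h₂ t) * ∫ s in c..d, g₂ s) := by
  rw [intervalIntegrable_iff_integrableOn_Ioo_of_le ‹_›] at hg₁ hg₂ hh₁ hh₂
  simp only [intervalIntegral.integral_of_le hab, intervalIntegral.integral_of_le hcd,
    integral_Ioc_eq_integral_Ioo]
  rw [← integral_prod_mul, ← integral_prod_mul]
  have hae : ∀ {P : ℝ × ℝ → Prop}, (∀ t ∈ Set.Ioo a b, ∀ s ∈ Set.Ioo c d, P (t, s)) →
      ∀ᵐ z ∂(volume.restrict (Set.Ioo a b)).prod (volume.restrict (Set.Ioo c d)), P z := by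
    intro P hP
    rw [Measure.prod_restrict]
    exact ae_restrict_of_forall_mem (measurableSet_Ioo.prod measurableSet_Ioo)
      fun z hz => hP z.1 hz.1 z.2 hz.2
  have hf_int : Integrable (Function.uncurry f)
      ((volume.restrict (Set.Ioo a b)).prod (volume.restrict (Set.Ioo c d))) :=
    integrable_of_le_of_le hf.aestronglyMeasurable (hae hlower) (hae hupper)
      (hh₁.mul_prod hg₁) (hh₂.mul_prod hg₂)
  change (∫ t in Set.Ioo a b, ∫ s in Set.Ioo c d, Function.uncurry f (t, s)) ∈ _
  rw [← integral_prod _ hf_int]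
  exact ⟨integral_mono_ae (hh₁.mul_prod hg₁) hf_int (hae hlower),
    integral_mono_ae hf_int (hh₂.mul_prod hg₂) (hae hupper)⟩

section BetaLaplace

/-- The density `u ^ (m - 1) * (L - u) ^ (n - 1)` of a beta integral on `(0, L)`, damped by
`exp (-y * u)`. -/
noncomputable def betaExpWeight (m n L y u : ℝ) : ℝ :=
  u ^ (m - 1) * (L - u) ^ (n - 1) * exp (-(y * u))

/-- The Laplace transform at `y` of the beta density on `(0, L)`. Up to the factor
`L ^ (m + n - 1) * B(m, n)` it is the confluent hypergeometric function `₁F₁(m; m + n; -L * y)`. -/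
noncomputable def betaLaplace (m n L y : ℝ) : ℝ :=
  ∫ u in (0 : ℝ)..L, betaExpWeight m n L y u

variable {m n L y : ℝ}

lemma betaExpWeight_pos {u : ℝ} (hu : u ∈ Set.Ioo 0 L) : 0 < betaExpWeight m n L y u :=
  mul_pos (mul_pos (rpow_pos_of_pos hu.1 _) (rpow_pos_of_pos (sub_pos.2 hu.2) _)) (exp_pos _)

lemma betaExpWeight_mul {u : ℝ} (hL : 0 < L) (hu : u ∈ Set.Icc 0 1) :
    betaExpWeight m n L y (L * u) = L ^ (m + n - 2) * betaExpWeight m n 1 (L * y) u := by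
  have hscale : L - L * u = L * (1 - u) := by ring
  simp only [betaExpWeight, hscale]
  rw [mul_rpow hL.le hu.1, mul_rpow hL.le (sub_nonneg.2 hu.2),
    show m + n - 2 = (m - 1) + (n - 1) by ring, rpow_add hL]
  ring_nf

lemma betaLaplace_eq_rpow_mul (m n y : ℝ) (hL : 0 < L) :
    betaLaplace m n L y = L ^ (m + n - 1) * betaLaplace m n 1 (L * y) := by
  calc betaLaplace m n L y = L * ∫ u in (0 : ℝ)..1, betaExpWeight m n L y (L * u) := by
        rw [intervalIntegral.mul_integral_comp_mul_left, mul_zero, mul_one, betaLaplace]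
    _ = L * ∫ u in (0 : ℝ)..1, L ^ (m + n - 2) * betaExpWeight m n 1 (L * y) u := by
        congr 1
        refine intervalIntegral.integral_congr fun u hu => betaExpWeight_mul hL ?_
        rwa [Set.uIcc_of_le zero_le_one] at hu
    _ = L ^ (m + n - 1) * betaLaplace m n 1 (L * y) := by
        rw [intervalIntegral.integral_const_mul, ← mul_assoc, mul_comm L, ← rpow_add_one hL.ne',
          betaLaplace]
        ring_nf

lemma intervalIntegrable_rpow_mul_one_sub_rpow (hm : 0 < m) (hn : 0 < n) :
    IntervalIntegrable (fun u : ℝ => u ^ (m - 1) * (1 - u) ^ (n - 1)) volume 0 1 := by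
  have hcomplex := Complex.betaIntegral_convergent (u := m) (v := n) (by simpa) (by simpa)
  refine hcomplex.norm.congr_uIoo fun u hu => ?_
  rw [Set.uIoo_of_le zero_le_one] at hu
  have hu' : 0 < 1 - u := sub_pos.2 hu.2
  have hcast : 1 - (u : ℂ) = ((1 - u : ℝ) : ℂ) := by push_cast; rfl
  dsimp only
  rw [norm_mul, hcast, Complex.norm_cpow_eq_rpow_re_of_pos hu.1,
    Complex.norm_cpow_eq_rpow_re_of_pos hu', Complex.sub_re, Complex.sub_re, Complex.ofReal_re,
    Complex.ofReal_re, Complex.one_re]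

lemma intervalIntegrable_betaExpWeight (hm : 0 < m) (hn : 0 < n) (hL : 0 < L) (y : ℝ) :
    IntervalIntegrable (betaExpWeight m n L y) volume 0 L := by
  have hunit : IntervalIntegrable (betaExpWeight m n 1 (L * y)) volume 0 1 :=
    (intervalIntegrable_rpow_mul_one_sub_rpow hm hn).mul_continuousOn (by fun_prop)
  have hscaled := (hunit.comp_mul_left (c := L⁻¹)).const_mul (L ^ (m + n - 2))
  rw [zero_div, one_div, inv_inv] at hscaled
  refine hscaled.congr_uIoo fun u hu => ?_
  rw [Set.uIoo_of_le hL.le] at hu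
  have hmem : L⁻¹ * u ∈ Set.Icc 0 1 := by
    rw [inv_mul_eq_div]
    exact ⟨div_nonneg hu.1.le hL.le, div_le_one_of_le₀ hu.2.le hL.le⟩
  dsimp only
  rw [← betaExpWeight_mul hL hmem, mul_inv_cancel_left₀ hL.ne']

lemma betaLaplace_nonneg (hL : 0 ≤ L) : 0 ≤ betaLaplace m n L y := by
  rw [betaLaplace, intervalIntegral.integral_of_le hL, integral_Ioc_eq_integral_Ioo]
  exact setIntegral_nonneg measurableSet_Ioo fun u hu => (betaExpWeight_pos hu).le

lemma measurable_betaLaplace (hL : 0 ≤ L) : Measurable (betaLaplace m n L) := by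
  have huncurried : StronglyMeasurable fun z : ℝ × ℝ => betaExpWeight m n L z.1 z.2 := by
    unfold betaExpWeight
    exact Measurable.stronglyMeasurable (by fun_prop)
  have heq : betaLaplace m n L = fun y => ∫ u in Set.Ioc 0 L, betaExpWeight m n L y u :=
    funext fun y => intervalIntegral.integral_of_le hL
  rw [heq]
  exact (huncurried.integral_prod_right' (ν := volume.restrict (Set.Ioc 0 L))).measurable

lemma integral_rpow_mul_exp_neg_le (hm : 0 < m) (hy : 0 ≤ y) :
    ∫ u in (0 : ℝ)..1, u ^ (m - 1) * exp (-(y * u)) ≤ exp 1 * Gamma m * (1 + y) ^ (-m) := by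
  have hy1 : 0 < 1 + y := by linarith
  have hgamma : IntegrableOn (fun u : ℝ => u ^ (m - 1) * exp (-((1 + y) * u))) (Set.Ioi 0) := by
    simpa only [rpow_one, neg_mul] using
      integrableOn_rpow_mul_exp_neg_mul_rpow (by linarith : -1 < m - 1) one_pos hy1
  have hnonneg : ∀ u ∈ Set.Ioi (0 : ℝ), 0 ≤ u ^ (m - 1) * exp (-((1 + y) * u)) :=
    fun u hu => mul_nonneg (rpow_nonneg (le_of_lt hu) _) (exp_pos _).le
  rw [intervalIntegral.integral_of_le zero_le_one]
  calc ∫ u in Set.Ioc (0 : ℝ) 1, u ^ (m - 1) * exp (-(y * u))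
      ≤ ∫ u in Set.Ioc (0 : ℝ) 1, exp 1 * (u ^ (m - 1) * exp (-((1 + y) * u))) := by
        refine setIntegral_mono_on ?_ ((hgamma.mono_set Set.Ioc_subset_Ioi_self).const_mul _)
          measurableSet_Ioc fun u hu => ?_
        · rw [← intervalIntegrable_iff_integrableOn_Ioc_of_le zero_le_one]
          exact (intervalIntegral.intervalIntegrable_rpow' (by linarith)).mul_continuousOn
            (by fun_prop)
        · have hexp : exp (-(y * u)) ≤ exp 1 * exp (-((1 + y) * u)) := by
            rw [← exp_add]
            exact exp_le_exp.2 (by linarith [hu.2])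
          rw [mul_left_comm]
          exact mul_le_mul_of_nonneg_left hexp (rpow_nonneg hu.1.le _)
    _ ≤ exp 1 * ∫ u in Set.Ioi (0 : ℝ), u ^ (m - 1) * exp (-((1 + y) * u)) := by
        rw [integral_const_mul]
        gcongr
        · exact ae_restrict_of_forall_mem measurableSet_Ioi hnonneg
        · exact Set.Ioc_subset_Ioi_self
    _ = exp 1 * Gamma m * (1 + y) ^ (-m) := by
        rw [integral_rpow_mul_exp_neg_mul_Ioi hm hy1, one_div, inv_rpow hy1.le, rpow_neg hy1.le]
        ring

lemma betaExpWeight_one_le {u : ℝ} (hy : 0 ≤ y) (hu : u ∈ Set.Ioo 0 1) :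
    betaExpWeight m n 1 y u ≤ (1 / 2) ^ (-|n - 1|) * (u ^ (m - 1) * exp (-(y * u))) +
      exp (-(1 / 2 * y)) * (u ^ (m - 1) * (1 - u) ^ (n - 1)) := by
  have hu0 : 0 < u ^ (m - 1) := rpow_pos_of_pos hu.1 _
  have hu1 : 0 < (1 - u) ^ (n - 1) := rpow_pos_of_pos (sub_pos.2 hu.2) _
  rcases le_total u (1 / 2) with h | h
  · have hfar : (1 - u) ^ (n - 1) ≤ (1 / 2) ^ (-|n - 1|) :=
      (rpow_mem_Icc_of_le_one (by norm_num) (by linarith) (by linarith [hu.1]) _).2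
    calc betaExpWeight m n 1 y u = (1 - u) ^ (n - 1) * (u ^ (m - 1) * exp (-(y * u))) := by
          rw [betaExpWeight]; ring
      _ ≤ (1 / 2) ^ (-|n - 1|) * (u ^ (m - 1) * exp (-(y * u))) := by gcongr
      _ ≤ _ := le_add_of_nonneg_right (by positivity)
  · have hdecay : exp (-(y * u)) ≤ exp (-(1 / 2 * y)) := by
      rw [mul_comm y]
      gcongr
    calc betaExpWeight m n 1 y u = exp (-(y * u)) * (u ^ (m - 1) * (1 - u) ^ (n - 1)) := by
          rw [betaExpWeight]; ring
      _ ≤ exp (-(1 / 2 * y)) * (u ^ (m - 1) * (1 - u) ^ (n - 1)) := by gcongr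
      _ ≤ _ := le_add_of_nonneg_left (by positivity)

lemma exists_betaLaplace_le (hm : 0 < m) (hn : 0 < n) : ∃ C > 0, ∀ L y : ℝ, 0 < L → 0 ≤ y →
    betaLaplace m n L y ≤ C * (L ^ (m + n - 1) * (1 + L * y) ^ (-m)) := by
  set B : ℝ := ∫ u in (0 : ℝ)..1, u ^ (m - 1) * (1 - u) ^ (n - 1)
  have hB : 0 ≤ B := intervalIntegral.integral_nonneg zero_le_one fun u hu =>
    mul_nonneg (rpow_nonneg hu.1 _) (rpow_nonneg (sub_nonneg.2 hu.2) _)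
  refine ⟨(1 / 2) ^ (-|n - 1|) * (exp 1 * Gamma m) + (1 + m / (1 / 2)) ^ m * B, by positivity,
    fun L y hL hy => ?_⟩
  rw [betaLaplace_eq_rpow_mul m n y hL, mul_left_comm]
  gcongr
  have hz : 0 ≤ L * y := by positivity
  generalize L * y = z at hz ⊢
  have hhead : IntervalIntegrable (fun u : ℝ => u ^ (m - 1) * exp (-(z * u))) volume 0 1 :=
    (intervalIntegral.intervalIntegrable_rpow' (by linarith)).mul_continuousOn (by fun_prop)
  have htail := intervalIntegrable_rpow_mul_one_sub_rpow hm hn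
  have hexp : exp (-(1 / 2 * z)) ≤ (1 + m / (1 / 2)) ^ m * (1 + z) ^ (-m) := by
    rw [exp_neg, rpow_neg (by positivity), ← div_eq_mul_inv, inv_eq_one_div,
      div_le_div_iff₀ (exp_pos _) (by positivity), one_mul]
    exact one_add_rpow_le_mul_exp hm (by norm_num) hz
  calc betaLaplace m n 1 z
      ≤ ∫ u in (0 : ℝ)..1, ((1 / 2) ^ (-|n - 1|) * (u ^ (m - 1) * exp (-(z * u))) +
          exp (-(1 / 2 * z)) * (u ^ (m - 1) * (1 - u) ^ (n - 1))) :=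
        intervalIntegral.integral_mono_on_of_le_Ioo zero_le_one
          (intervalIntegrable_betaExpWeight hm hn one_pos z)
          ((hhead.const_mul _).add (htail.const_mul _)) fun u hu => betaExpWeight_one_le hz hu
    _ = (1 / 2) ^ (-|n - 1|) * (∫ u in (0 : ℝ)..1, u ^ (m - 1) * exp (-(z * u))) +
          exp (-(1 / 2 * z)) * B := by
        rw [intervalIntegral.integral_add (hhead.const_mul _) (htail.const_mul _),
          intervalIntegral.integral_const_mul, intervalIntegral.integral_const_mul]
    _ ≤ (1 / 2) ^ (-|n - 1|) * (exp 1 * Gamma m * (1 + z) ^ (-m)) +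
          ((1 + m / (1 / 2)) ^ m * (1 + z) ^ (-m)) * B := by
        gcongr
        exact integral_rpow_mul_exp_neg_le hm hz
    _ = _ := by ring

lemma le_betaExpWeight_one {u : ℝ} (hy : 0 ≤ y) (hu : u ∈ Set.Ioo 0 (1 / 2 * (1 + y)⁻¹)) :
    (1 / 2) ^ |n - 1| * exp (-1) * u ^ (m - 1) ≤ betaExpWeight m n 1 y u := by
  have hyu : (1 + y) * u ≤ 1 / 2 := by
    have := hu.2.le
    rwa [← div_eq_mul_inv, le_div_iff₀' (by positivity)] at this
  have hyu0 : 0 ≤ y * u := mul_nonneg hy hu.1.le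
  have hfar : (1 / 2) ^ |n - 1| ≤ (1 - u) ^ (n - 1) :=
    (rpow_mem_Icc_of_le_one (by norm_num) (by linarith) (by linarith [hu.1]) _).1
  have hpos : 0 < u ^ (m - 1) := rpow_pos_of_pos hu.1 _
  calc (1 / 2) ^ |n - 1| * exp (-1) * u ^ (m - 1)
      ≤ (1 - u) ^ (n - 1) * exp (-(y * u)) * u ^ (m - 1) := by
        have : 0 ≤ (1 - u) ^ (n - 1) := rpow_nonneg (by linarith) _
        gcongr
        linarith [hu.1]
    _ = betaExpWeight m n 1 y u := by rw [betaExpWeight]; ring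

lemma exists_le_betaLaplace (hm : 0 < m) (hn : 0 < n) : ∃ c > 0, ∀ L y : ℝ, 0 < L → 0 ≤ y →
    c * (L ^ (m + n - 1) * (1 + L * y) ^ (-m)) ≤ betaLaplace m n L y := by
  refine ⟨(1 / 2) ^ |n - 1| * exp (-1) * ((1 / 2) ^ m / m), by positivity, fun L y hL hy => ?_⟩
  rw [betaLaplace_eq_rpow_mul m n y hL, mul_left_comm]
  gcongr
  have hz : 0 ≤ L * y := by positivity
  generalize L * y = z at hz ⊢
  have hδ0 : 0 < 1 / 2 * (1 + z)⁻¹ := by positivity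
  have hδ1 : 1 / 2 * (1 + z)⁻¹ ≤ 1 := by
    linarith [inv_le_one_of_one_le₀ (by linarith : 1 ≤ 1 + z)]
  have hint := intervalIntegrable_betaExpWeight hm hn one_pos z
  calc (1 / 2) ^ |n - 1| * exp (-1) * ((1 / 2) ^ m / m) * (1 + z) ^ (-m)
      = ∫ u in (0 : ℝ)..(1 / 2 * (1 + z)⁻¹), (1 / 2) ^ |n - 1| * exp (-1) * u ^ (m - 1) := by
        rw [intervalIntegral.integral_const_mul, integral_rpow (Or.inl (by linarith)),
          sub_add_cancel, zero_rpow hm.ne', sub_zero, mul_rpow (by norm_num) (by positivity),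
          inv_rpow (by positivity), rpow_neg (by positivity)]
        ring
    _ ≤ ∫ u in (0 : ℝ)..(1 / 2 * (1 + z)⁻¹), betaExpWeight m n 1 z u := by
        refine intervalIntegral.integral_mono_on_of_le_Ioo hδ0.le
          ((intervalIntegral.intervalIntegrable_rpow' (by linarith)).const_mul _)
          (hint.mono_set ?_) fun u hu => le_betaExpWeight_one hz hu
        rw [Set.uIcc_of_le hδ0.le, Set.uIcc_of_le zero_le_one]
        exact Set.Icc_subset_Icc_right hδ1
    _ ≤ betaLaplace m n 1 z := by
        refine intervalIntegral.integral_mono_interval le_rfl hδ0.le hδ1 ?_ hint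
        rw [← Measure.restrict_congr_set Ioo_ae_eq_Ioc]
        exact ae_restrict_of_forall_mem measurableSet_Ioo fun u hu => (betaExpWeight_pos hu).le

end BetaLaplace

section Kernel

lemma Erk1_eq_exp_mul_betaLaplace (k x v : ℝ) :
    Erk1 k x v = Gamma (k + 1 / 2) / (√π * Gamma k) *
      (exp (x * v) * betaLaplace k (k + 1) 2 (x * v)) := by
  have hsubst := intervalIntegral.integral_comp_sub_left (a := 0) (b := 2)
    (fun z => exp (z * x * v) * (1 - z) ^ (k - 1) * (1 + z) ^ k) 1
  norm_num only at hsubst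
  rw [Erk1, ← hsubst, betaLaplace]
  congr 1
  rw [← intervalIntegral.integral_const_mul]
  congr 1 with u
  rw [betaExpWeight, show (1 - u) * x * v = x * v + -(x * v * u) by ring, exp_add]
  ring_nf

lemma Erk1_eq_exp_neg_mul_betaLaplace (k x v : ℝ) :
    Erk1 k x v = Gamma (k + 1 / 2) / (√π * Gamma k) *
      (exp (-(x * v)) * betaLaplace (k + 1) k 2 (-(x * v))) := by
  have hsubst := intervalIntegral.integral_comp_sub_right (a := 0) (b := 2)
    (fun z => exp (z * x * v) * (1 - z) ^ (k - 1) * (1 + z) ^ k) 1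
  norm_num only at hsubst
  rw [Erk1, ← hsubst, betaLaplace]
  congr 1
  rw [← intervalIntegral.integral_const_mul]
  congr 1 with u
  rw [betaExpWeight, show (u - 1) * x * v = -(x * v) + -(-(x * v) * u) by ring, exp_add]
  ring_nf

/-- The integrand of `E_k(X, λ)` after dividing out its exponential growth `e^{⟨λ, X⁺⟩}` and
the constant of the rank-one kernel, in the coordinates `s = ν₁ - λ₂`, `t = ν₂ - λ₃`.
Here `p = α_λ`, `q = β_λ`, `a = α_{X⁺}` and `b = β_{X⁺}`, and `s + q - t = ν₁ - ν₂`. -/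
noncomputable def reducedIntegrand (k p q a b t s : ℝ) : ℝ :=
  (s * (p + q - t) * betaLaplace k (k + 1) 2 (b * (s + q - t) / 2)
      + (p - s) * (q - t) * betaLaplace (k + 1) k 2 (b * (s + q - t) / 2))
    * ((s + q) * t) * exp (-(a * s + (a + b) * t))
    * ((p - s) * (p + q - t) * s * (q - t) * (s + q) * t) ^ (k - 1)

lemma measurable_uncurry_reducedIntegrand (k p q a b : ℝ) :
    Measurable (Function.uncurry (reducedIntegrand k p q a b)) := by
  have hnear := measurable_betaLaplace (m := k) (n := k + 1) (L := 2) zero_le_two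
  have hfar := measurable_betaLaplace (m := k + 1) (n := k) (L := 2) zero_le_two
  unfold Function.uncurry reducedIntegrand
  fun_prop

lemma EkA2_integrand_eq_mul_reducedIntegrand (k x1 x2 x3 n1 n2 : ℝ) {l1 l2 l3 : ℝ}
    (hl : l1 + l2 + l3 = 0) :
    ((n1 - l2) * (l1 - n2) * Erk1 k ((x1 - x2) / 2) (n1 - n2)
        + (l1 - n1) * (l2 - n2) * Erk1 k (-(x1 - x2) / 2) (n1 - n2))
      * ((n1 - l3) * (n2 - l3)) * exp ((x1 + x2 - 2 * x3) * (n1 + n2) / 2)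
      * Wk k l1 l2 l3 n1 n2 =
    Gamma (k + 1 / 2) / (√π * Gamma k) * exp (l1 * x3 + l2 * x1 + l3 * x2)
      * reducedIntegrand k (l1 - l2) (l2 - l3) (x3 - x1) (x1 - x2) (n2 - l3) (n1 - l2) := by
  have hexp : exp (l1 * x3 + l2 * x1 + l3 * x2)
        * exp (-((x3 - x1) * (n1 - l2) + (x3 - x1 + (x1 - x2)) * (n2 - l3))) =
      exp ((x1 - x2) / 2 * (n1 - n2)) * exp ((x1 + x2 - 2 * x3) * (n1 + n2) / 2) := by
    rw [← exp_add, ← exp_add]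
    congr 1
    linear_combination x3 * hl
  rw [Erk1_eq_exp_mul_betaLaplace, Erk1_eq_exp_neg_mul_betaLaplace, Wk, reducedIntegrand,
    show -(-(x1 - x2) / 2 * (n1 - n2)) = (x1 - x2) / 2 * (n1 - n2) by ring,
    show (x1 - x2) * (n1 - l2 + (l2 - l3) - (n2 - l3)) / 2 = (x1 - x2) / 2 * (n1 - n2) by ring,
    show l1 - l2 - (n1 - l2) = l1 - n1 by ring, show l2 - l3 - (n2 - l3) = l2 - n2 by ring,
    show l1 - l2 + (l2 - l3) - (n2 - l3) = l1 - n2 by ring,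
    show n1 - l2 + (l2 - l3) = n1 - l3 by ring]
  linear_combination (-(Gamma (k + 1 / 2) / (√π * Gamma k)) * ((n1 - l2) * (l1 - n2)
      * betaLaplace k (k + 1) 2 ((x1 - x2) / 2 * (n1 - n2)) + (l1 - n1) * (l2 - n2)
      * betaLaplace (k + 1) k 2 ((x1 - x2) / 2 * (n1 - n2))) * ((n1 - l3) * (n2 - l3))
      * ((l1 - n1) * (l1 - n2) * (n1 - l2) * (l2 - n2) * (n1 - l3) * (n2 - l3)) ^ (k - 1)) * hexp

lemma EkA2_eq_mul_integral_reducedIntegrand (k x1 x2 x3 : ℝ) {l1 l2 l3 : ℝ}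
    (hl : l1 + l2 + l3 = 0) :
    EkA2 k x1 x2 x3 l1 l2 l3 =
      3 * Gamma (3 * k) / Gamma k ^ 2 * (Gamma (k + 1 / 2) / (√π * Gamma k))
        * (exp (l1 * x3 + l2 * x1 + l3 * x2) / Vlam l1 l2 l3 ^ (2 * k)
        * ∫ t in (0 : ℝ)..(l2 - l3), ∫ s in (0 : ℝ)..(l1 - l2),
            reducedIntegrand k (l1 - l2) (l2 - l3) (x3 - x1) (x1 - x2) t s) := by
  simp only [EkA2, EkA2_integrand_eq_mul_reducedIntegrand k x1 x2 x3 _ _ hl,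
    intervalIntegral.integral_const_mul]
  rw [intervalIntegral.integral_comp_sub_right (fun t => ∫ n1 in l2..l1,
    reducedIntegrand k (l1 - l2) (l2 - l3) (x3 - x1) (x1 - x2) t (n1 - l2)) l3]
  simp only [intervalIntegral.integral_comp_sub_right, sub_self]
  ring

end Kernel

section PointwiseBounds

lemma exists_betaLaplace_two_mul_exp_le {m n : ℝ} (hm : 0 < m) (hn : 0 < n) :
    ∃ C > 0, ∀ b d q t v : ℝ, 0 ≤ b → b ≤ d → 0 ≤ q → 0 ≤ t → 0 ≤ v → q ≤ v + t →
      betaLaplace m n 2 (b * v / 2) * exp (-(d * t)) ≤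
        C * ((1 + q * b) ^ (-m) * exp (-(d / 2 * t))) := by
  obtain ⟨C, hC, hle⟩ := exists_betaLaplace_le hm hn
  refine ⟨C * 2 ^ (m + n - 1) * (1 + m / (1 / 2)) ^ m, by positivity,
    fun b d q t v hb hbd hq ht hv hqvt => ?_⟩
  have hbq : (1 + b * v) ^ (-m) ≤ (1 + b * t) ^ m * (1 + q * b) ^ (-m) :=
    rpow_neg_le_mul_rpow_neg hm.le (by positivity) (by positivity)
      (by nlinarith [mul_nonneg hb (sub_nonneg.2 hqvt),
        mul_nonneg (mul_nonneg hb ht) (mul_nonneg hb hv)])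
  have hbt : (1 + b * t) ^ m ≤ (1 + m / (1 / 2)) ^ m * exp (d / 2 * t) :=
    calc (1 + b * t) ^ m ≤ (1 + m / (1 / 2)) ^ m * exp (1 / 2 * (b * t)) :=
          one_add_rpow_le_mul_exp hm (by norm_num) (by positivity)
      _ ≤ (1 + m / (1 / 2)) ^ m * exp (d / 2 * t) := by
          have hexp : 1 / 2 * (b * t) ≤ d / 2 * t := by
            linarith [mul_le_mul_of_nonneg_right hbd ht]
          gcongr _ * exp ?_
  calc betaLaplace m n 2 (b * v / 2) * exp (-(d * t))
      ≤ C * (2 ^ (m + n - 1) * (1 + b * v) ^ (-m)) * exp (-(d * t)) := by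
        have := hle 2 (b * v / 2) two_pos (by positivity)
        rw [mul_div_cancel₀ _ two_ne_zero] at this
        gcongr
    _ ≤ C * (2 ^ (m + n - 1) * (((1 + m / (1 / 2)) ^ m * exp (d / 2 * t)) * (1 + q * b) ^ (-m)))
          * exp (-(d * t)) := by
        gcongr
        exact hbq.trans (by gcongr)
    _ = C * 2 ^ (m + n - 1) * (1 + m / (1 / 2)) ^ m
          * ((1 + q * b) ^ (-m) * (exp (d / 2 * t) * exp (-(d * t)))) := by ring
    _ = _ := by
        rw [← exp_add]
        ring_nf

lemma exists_le_betaLaplace_two {m n : ℝ} (hm : 0 < m) (hn : 0 < n) :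
    ∃ c > 0, ∀ b q v : ℝ, 0 ≤ b → 0 ≤ v → v ≤ 2 * q →
      c * (1 + q * b) ^ (-m) ≤ betaLaplace m n 2 (b * v / 2) := by
  obtain ⟨c, hc, hle⟩ := exists_le_betaLaplace hm hn
  refine ⟨c * 2 ^ (m + n - 1) / 2 ^ m, by positivity, fun b q v hb hv hvq => ?_⟩
  have hbv : (1 + q * b) ^ (-m) ≤ 2 ^ m * (1 + b * v) ^ (-m) :=
    rpow_neg_le_mul_rpow_neg hm.le (by positivity) two_pos (by nlinarith)
  calc c * 2 ^ (m + n - 1) / 2 ^ m * (1 + q * b) ^ (-m)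
      ≤ c * 2 ^ (m + n - 1) / 2 ^ m * (2 ^ m * (1 + b * v) ^ (-m)) := by gcongr
    _ = c * (2 ^ (m + n - 1) * (1 + b * v) ^ (-m)) := by field_simp
    _ ≤ betaLaplace m n 2 (b * v / 2) := by
        have := hle 2 (b * v / 2) two_pos (by positivity)
        rwa [mul_div_cancel₀ _ two_ne_zero] at this

variable {k p q a b s t : ℝ}

lemma reducedIntegrand_eq (hs : s ∈ Set.Ioo 0 p) (ht : t ∈ Set.Ioo 0 q) :
    reducedIntegrand k p q a b t s =
      (betaLaplace k (k + 1) 2 (b * (s + q - t) / 2) * exp (-((a + b) * t))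
          * ((p + q - t) ^ k * (q - t) ^ (k - 1)) * betaExpWeight (k + 1) k p a s
        + betaLaplace (k + 1) k 2 (b * (s + q - t) / 2) * exp (-((a + b) * t))
          * ((p + q - t) ^ (k - 1) * (q - t) ^ k) * betaExpWeight k (k + 1) p a s)
      * ((s + q) ^ k * t ^ k) := by
  obtain ⟨hs0, hsp⟩ := hs
  obtain ⟨ht0, htq⟩ := ht
  have hp_s : 0 < p - s := sub_pos.2 hsp
  have hR : 0 < q - t := sub_pos.2 htq
  have hB : 0 < p + q - t := by linarith
  have hsq : 0 < s + q := by linarith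
  have hpow : ∀ {x : ℝ}, 0 < x → x ^ k = x * x ^ (k - 1) := fun hx => by
    rw [mul_comm, ← rpow_add_one hx.ne', sub_add_cancel]
  have hprod : ((p - s) * (p + q - t) * s * (q - t) * (s + q) * t) ^ (k - 1) =
      (p - s) ^ (k - 1) * (p + q - t) ^ (k - 1) * s ^ (k - 1) * (q - t) ^ (k - 1)
        * (s + q) ^ (k - 1) * t ^ (k - 1) := by
    rw [mul_rpow (by positivity) ht0.le, mul_rpow (by positivity) hsq.le,
      mul_rpow (by positivity) hR.le, mul_rpow (by positivity) hs0.le, mul_rpow hp_s.le hB.le]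
  rw [reducedIntegrand, hprod, betaExpWeight, betaExpWeight, add_sub_cancel_right, hpow hs0,
    hpow hp_s, hpow hR, hpow hB, hpow hsq, hpow ht0, neg_add, exp_add]
  ring

lemma rpow_mul_rpow_sub_one_bounds {R B D : ℝ} (hk : 0 ≤ k) (hR : 0 < R) (hRB : R ≤ B)
    (hBD : B ≤ D) :
    R ^ (2 * k) / D ≤ B ^ (k - 1) * R ^ k ∧ B ^ (k - 1) * R ^ k ≤ B ^ k * R ^ (k - 1) ∧
      B ^ k * R ^ (k - 1) ≤ D ^ k * R ^ (k - 1) := by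
  have hB : 0 < B := hR.trans_le hRB
  refine ⟨?_, ?_, by gcongr⟩
  · rw [rpow_sub_one hB.ne', two_mul, rpow_add hR, div_mul_eq_mul_div]
    gcongr
  · rw [rpow_sub_one hB.ne', rpow_sub_one hR.ne', div_mul_eq_mul_div, mul_div_assoc]
    gcongr

/-- The `s`-dependence of `reducedIntegrand` after the unreflected and the reflected rank-one
kernels have been replaced by their sizes `(1 + Q) ^ (-k)` and `(1 + Q) ^ (-(k + 1))`, where
`Q = β_λ β_{X⁺}`. -/
noncomputable def innerWeight (k p a Q s : ℝ) : ℝ :=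
  (1 + Q) ^ (-k) * betaExpWeight (k + 1) k p a s
    + (1 + Q) ^ (-(k + 1)) * betaExpWeight k (k + 1) p a s

lemma exists_reducedIntegrand_le (hk : 0 < k) : ∃ C > 0, ∀ p q a b s t : ℝ,
    p ≤ q → 0 ≤ a → 0 ≤ b → s ∈ Set.Ioo 0 p → t ∈ Set.Ioo 0 q →
      reducedIntegrand k p q a b t s ≤
        C * (q ^ (2 * k) * betaExpWeight (k + 1) k q ((a + b) / 2) t)
          * innerWeight k p a (q * b) s := by
  obtain ⟨C₁, hC₁, hle₁⟩ := exists_betaLaplace_two_mul_exp_le hk (by positivity : 0 < k + 1)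
  obtain ⟨C₂, hC₂, hle₂⟩ := exists_betaLaplace_two_mul_exp_le (by positivity : 0 < k + 1) hk
  refine ⟨(C₁ + C₂) * 2 ^ (2 * k), by positivity, fun p q a b s t hpq ha hb hs ht => ?_⟩
  rw [reducedIntegrand_eq hs ht]
  have hW₁ := betaExpWeight_pos (m := k + 1) (n := k) (y := a) hs
  have hW₂ := betaExpWeight_pos (m := k) (n := k + 1) (y := a) hs
  obtain ⟨hs0, hsp⟩ := hs
  obtain ⟨ht0, htq⟩ := ht
  have hq : 0 < q := by linarith
  obtain ⟨-, hfac₂, hfac₁⟩ := rpow_mul_rpow_sub_one_bounds (D := 2 * q) hk.le (sub_pos.2 htq)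
    (by linarith : q - t ≤ p + q - t) (by linarith)
  have hB : 0 < p + q - t := by linarith
  calc _ ≤ ((C₁ + C₂) * ((1 + q * b) ^ (-k) * exp (-((a + b) / 2 * t)))
            * ((2 * q) ^ k * (q - t) ^ (k - 1)) * betaExpWeight (k + 1) k p a s
          + (C₁ + C₂) * ((1 + q * b) ^ (-(k + 1)) * exp (-((a + b) / 2 * t)))
            * ((2 * q) ^ k * (q - t) ^ (k - 1)) * betaExpWeight k (k + 1) p a s)
          * ((2 * q) ^ k * t ^ k) := by
        have hker₁ := (hle₁ b (a + b) q t (s + q - t) hb (by linarith) hq.le ht0.le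
          (by linarith) (by linarith)).trans
            (mul_le_mul_of_nonneg_right (le_add_of_nonneg_right hC₂.le) (by positivity))
        have hker₂ := (hle₂ b (a + b) q t (s + q - t) hb (by linarith) hq.le ht0.le
          (by linarith) (by linarith)).trans
            (mul_le_mul_of_nonneg_right (le_add_of_nonneg_left hC₁.le) (by positivity))
        gcongr (?_ * ?_ * _ + ?_ * ?_ * _) * (?_ ^ k * _)
        · exact hfac₂.trans hfac₁
        · linarith
    _ = _ := by
        rw [mul_rpow zero_le_two hq.le, two_mul k, rpow_add two_pos, rpow_add hq]
        simp only [betaExpWeight, innerWeight, add_sub_cancel_right]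
        ring

lemma exists_le_reducedIntegrand (hk : 0 < k) : ∃ c > 0, ∀ p q a b s t : ℝ, p ≤ q → 0 ≤ b →
    s ∈ Set.Ioo 0 p → t ∈ Set.Ioo 0 q →
      c * (q ^ (k - 1) * betaExpWeight (k + 1) (2 * k + 1) q (a + b) t)
        * innerWeight k p a (q * b) s ≤ reducedIntegrand k p q a b t s := by
  obtain ⟨c₁, hc₁, hle₁⟩ := exists_le_betaLaplace_two hk (by positivity : 0 < k + 1)
  obtain ⟨c₂, hc₂, hle₂⟩ := exists_le_betaLaplace_two (by positivity : 0 < k + 1) hk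
  refine ⟨min c₁ c₂ / 2, by positivity, fun p q a b s t hpq hb hs ht => ?_⟩
  rw [reducedIntegrand_eq hs ht]
  have hW₁ := betaExpWeight_pos (m := k + 1) (n := k) (y := a) hs
  have hW₂ := betaExpWeight_pos (m := k) (n := k + 1) (y := a) hs
  obtain ⟨hs0, hsp⟩ := hs
  obtain ⟨ht0, htq⟩ := ht
  have hq : 0 < q := by linarith
  obtain ⟨hfac₂, hfac₁, -⟩ := rpow_mul_rpow_sub_one_bounds (D := 2 * q) hk.le (sub_pos.2 htq)
    (by linarith : q - t ≤ p + q - t) (by linarith)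
  have hB : 0 < p + q - t := by linarith
  calc _ = (min c₁ c₂ * (1 + q * b) ^ (-k) * exp (-((a + b) * t))
            * ((q - t) ^ (2 * k) / (2 * q)) * betaExpWeight (k + 1) k p a s
          + min c₁ c₂ * (1 + q * b) ^ (-(k + 1)) * exp (-((a + b) * t))
            * ((q - t) ^ (2 * k) / (2 * q)) * betaExpWeight k (k + 1) p a s)
          * (q ^ k * t ^ k) := by
        rw [rpow_sub_one hq.ne']
        simp only [betaExpWeight, innerWeight, add_sub_cancel_right]
        ring
    _ ≤ _ := by
        have hker₁ := (mul_le_mul_of_nonneg_right (min_le_left c₁ c₂) (by positivity)).trans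
          (hle₁ b q (s + q - t) hb (by linarith) (by linarith))
        have hker₂ := (mul_le_mul_of_nonneg_right (min_le_right c₁ c₂) (by positivity)).trans
          (hle₂ b q (s + q - t) hb (by linarith) (by linarith))
        have hker₁_nonneg := (by positivity : 0 ≤ min c₁ c₂ * (1 + q * b) ^ (-k)).trans hker₁
        have hker₂_nonneg := (by positivity : 0 ≤ min c₁ c₂ * (1 + q * b) ^ (-(k + 1))).trans hker₂
        gcongr (?_ * exp _ * ?_ * _ + ?_ * exp _ * ?_ * _) * (?_ ^ k * _)
        · exact hfac₂.trans hfac₁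
        · linarith

end PointwiseBounds

section IntegralBounds

variable {k p : ℝ}

lemma intervalIntegrable_innerWeight (hk : 0 < k) (hp : 0 < p) (a Q : ℝ) :
    IntervalIntegrable (innerWeight k p a Q) volume 0 p :=
  ((intervalIntegrable_betaExpWeight (by positivity) hk hp a).const_mul _).add
    ((intervalIntegrable_betaExpWeight hk (by positivity) hp a).const_mul _)

lemma integral_innerWeight (hk : 0 < k) (hp : 0 < p) (a Q : ℝ) :
    ∫ s in (0 : ℝ)..p, innerWeight k p a Q s =
      (1 + Q) ^ (-k) * betaLaplace (k + 1) k p a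
        + (1 + Q) ^ (-(k + 1)) * betaLaplace k (k + 1) p a := by
  simp only [innerWeight, betaLaplace]
  rw [intervalIntegral.integral_add, intervalIntegral.integral_const_mul,
    intervalIntegral.integral_const_mul]
  exacts [(intervalIntegrable_betaExpWeight (by positivity) hk hp a).const_mul _,
    (intervalIntegrable_betaExpWeight hk (by positivity) hp a).const_mul _]

lemma rpow_neg_mul_add_mul_rpow_neg {x y : ℝ} (hx : 0 ≤ x) (hy : 0 ≤ y) :
    (1 + y) ^ (-k) * (1 + x) ^ (-(k + 1)) + (1 + y) ^ (-(k + 1)) * (1 + x) ^ (-k) =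
      (1 / (1 + x) + 1 / (1 + y)) / ((1 + x) ^ k * (1 + y) ^ k) := by
  have hx1 : 0 < 1 + x := by positivity
  have hy1 : 0 < 1 + y := by positivity
  rw [rpow_neg hx1.le, rpow_neg hy1.le, rpow_neg hx1.le, rpow_neg hy1.le, rpow_add_one hx1.ne',
    rpow_add_one hy1.ne']
  field_simp

lemma exists_integral_innerWeight_le (hk : 0 < k) : ∃ C > 0, ∀ p a Q : ℝ,
    0 < p → 0 ≤ a → 0 ≤ Q →
    ∫ s in (0 : ℝ)..p, innerWeight k p a Q s ≤
      C * (p ^ (2 * k) / ((1 + p * a) ^ k * ((1 + Q) ^ k * (1 + min (p * a) Q)))) := by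
  obtain ⟨C₁, hC₁, hle₁⟩ := exists_betaLaplace_le (by positivity : 0 < k + 1) hk
  obtain ⟨C₂, hC₂, hle₂⟩ := exists_betaLaplace_le hk (by positivity : 0 < k + 1)
  refine ⟨(C₁ + C₂) * 2, by positivity, fun p a Q hp ha hQ => ?_⟩
  have hpa : 0 ≤ p * a := by positivity
  calc ∫ s in (0 : ℝ)..p, innerWeight k p a Q s
      = (1 + Q) ^ (-k) * betaLaplace (k + 1) k p a
        + (1 + Q) ^ (-(k + 1)) * betaLaplace k (k + 1) p a := integral_innerWeight hk hp a Q
    _ ≤ (1 + Q) ^ (-k) * ((C₁ + C₂) * (p ^ (k + 1 + k - 1) * (1 + p * a) ^ (-(k + 1))))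
        + (1 + Q) ^ (-(k + 1)) * ((C₁ + C₂) * (p ^ (k + (k + 1) - 1) * (1 + p * a) ^ (-k))) := by
      gcongr
      · exact (hle₁ p a hp ha).trans (by gcongr; linarith)
      · exact (hle₂ p a hp ha).trans (by gcongr; linarith)
    _ = (C₁ + C₂) * p ^ (2 * k) * ((1 + Q) ^ (-k) * (1 + p * a) ^ (-(k + 1))
        + (1 + Q) ^ (-(k + 1)) * (1 + p * a) ^ (-k)) := by ring_nf
    _ ≤ (C₁ + C₂) * p ^ (2 * k)
          * ((2 / (1 + min (p * a) Q)) / ((1 + p * a) ^ k * (1 + Q) ^ k)) := by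
      rw [rpow_neg_mul_add_mul_rpow_neg hpa hQ]
      gcongr
      exact one_div_one_add_add_le hpa hQ
    _ = _ := by
        rw [div_div]
        ring_nf

lemma exists_le_integral_innerWeight (hk : 0 < k) : ∃ c > 0, ∀ p a Q : ℝ,
    0 < p → 0 ≤ a → 0 ≤ Q →
    c * (p ^ (2 * k) / ((1 + p * a) ^ k * ((1 + Q) ^ k * (1 + min (p * a) Q)))) ≤
      ∫ s in (0 : ℝ)..p, innerWeight k p a Q s := by
  obtain ⟨c₁, hc₁, hle₁⟩ := exists_le_betaLaplace (by positivity : 0 < k + 1) hk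
  obtain ⟨c₂, hc₂, hle₂⟩ := exists_le_betaLaplace hk (by positivity : 0 < k + 1)
  refine ⟨min c₁ c₂, by positivity, fun p a Q hp ha hQ => ?_⟩
  have hpa : 0 ≤ p * a := by positivity
  calc min c₁ c₂ * (p ^ (2 * k) / ((1 + p * a) ^ k * ((1 + Q) ^ k * (1 + min (p * a) Q))))
      = min c₁ c₂ * p ^ (2 * k)
          * ((1 / (1 + min (p * a) Q)) / ((1 + p * a) ^ k * (1 + Q) ^ k)) := by
        rw [div_div]
        ring_nf
    _ ≤ min c₁ c₂ * p ^ (2 * k) * ((1 + Q) ^ (-k) * (1 + p * a) ^ (-(k + 1))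
        + (1 + Q) ^ (-(k + 1)) * (1 + p * a) ^ (-k)) := by
      rw [rpow_neg_mul_add_mul_rpow_neg hpa hQ]
      gcongr
      exact one_div_one_add_min_le hpa hQ
    _ = (1 + Q) ^ (-k) * (min c₁ c₂ * (p ^ (k + 1 + k - 1) * (1 + p * a) ^ (-(k + 1))))
        + (1 + Q) ^ (-(k + 1)) * (min c₁ c₂ * (p ^ (k + (k + 1) - 1) * (1 + p * a) ^ (-k))) := by
      ring_nf
    _ ≤ (1 + Q) ^ (-k) * betaLaplace (k + 1) k p a
        + (1 + Q) ^ (-(k + 1)) * betaLaplace k (k + 1) p a := by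
      gcongr
      · exact le_trans (by gcongr; exact min_le_left _ _) (hle₁ p a hp ha)
      · exact le_trans (by gcongr; exact min_le_right _ _) (hle₂ p a hp ha)
    _ = ∫ s in (0 : ℝ)..p, innerWeight k p a Q s := (integral_innerWeight hk hp a Q).symm

lemma exists_rpow_mul_betaLaplace_half_le (hk : 0 < k) : ∃ C > 0, ∀ p q d : ℝ,
    p ≤ q → 0 < q → 0 ≤ p → 0 ≤ d →
    q ^ (2 * k) * betaLaplace (k + 1) k q (d / 2) ≤
      C * ((q * (p + q)) ^ (2 * k) / (1 + (p + q) * d) ^ (k + 1)) := by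
  obtain ⟨C, hC, hle⟩ := exists_betaLaplace_le (by positivity : 0 < k + 1) hk
  refine ⟨C * 4 ^ (k + 1), by positivity, fun p q d hpq hq hp hd => ?_⟩
  have hscale : (1 + q * (d / 2)) ^ (-(k + 1)) ≤
      4 ^ (k + 1) * (1 + (p + q) * d) ^ (-(k + 1)) :=
    rpow_neg_le_mul_rpow_neg (by positivity) (by positivity) four_pos (by nlinarith)
  calc q ^ (2 * k) * betaLaplace (k + 1) k q (d / 2)
      ≤ q ^ (2 * k) * (C * (q ^ (k + 1 + k - 1)
          * (4 ^ (k + 1) * (1 + (p + q) * d) ^ (-(k + 1))))) := by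
        gcongr
        exact (hle q (d / 2) hq (by positivity)).trans (by gcongr)
    _ = C * 4 ^ (k + 1) * ((q * q) ^ (2 * k) / (1 + (p + q) * d) ^ (k + 1)) := by
        rw [rpow_neg (by positivity), mul_rpow hq.le hq.le]
        ring_nf
    _ ≤ C * 4 ^ (k + 1) * ((q * (p + q)) ^ (2 * k) / (1 + (p + q) * d) ^ (k + 1)) := by
        gcongr
        linarith

lemma exists_le_rpow_mul_betaLaplace (hk : 0 < k) : ∃ c > 0, ∀ p q d : ℝ,
    p ≤ q → 0 < q → 0 ≤ p → 0 ≤ d →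
    c * ((q * (p + q)) ^ (2 * k) / (1 + (p + q) * d) ^ (k + 1)) ≤
      q ^ (k - 1) * betaLaplace (k + 1) (2 * k + 1) q d := by
  obtain ⟨c, hc, hle⟩ := exists_le_betaLaplace (by positivity : 0 < k + 1)
    (by positivity : 0 < 2 * k + 1)
  refine ⟨c / 2 ^ (2 * k), by positivity, fun p q d hpq hq hp hd => ?_⟩
  calc c / 2 ^ (2 * k) * ((q * (p + q)) ^ (2 * k) / (1 + (p + q) * d) ^ (k + 1))
      ≤ c / 2 ^ (2 * k) * ((2 * (q * q)) ^ (2 * k) / (1 + q * d) ^ (k + 1)) := by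
        have hbase : q * (p + q) ≤ 2 * (q * q) := by nlinarith
        gcongr _ * (?_ ^ (2 * k) / (1 + ?_ * d) ^ (k + 1))
        linarith
    _ = q ^ (k - 1) * (c * (q ^ (k + 1 + (2 * k + 1) - 1) * (1 + q * d) ^ (-(k + 1)))) := by
        have hpow : (q * q) ^ (2 * k) = q ^ (k - 1) * q ^ (k + 1 + (2 * k + 1) - 1) := by
          rw [mul_rpow hq.le hq.le, ← rpow_add hq, ← rpow_add hq]
          ring_nf
        rw [mul_rpow zero_le_two (by positivity), hpow, rpow_neg (by positivity)]
        field_simp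
    _ ≤ q ^ (k - 1) * betaLaplace (k + 1) (2 * k + 1) q d := by
        gcongr
        exact hle q d hq hd

lemma exists_integral_reducedIntegrand_mem_Icc (hk : 0 < k) : ∃ c > 0, ∃ C > 0,
    ∀ p q a b : ℝ, 0 < p → p ≤ q → 0 ≤ a → 0 ≤ b →
      let R := (p * (p + q) * q) ^ (2 * k) /
        ((1 + p * a) ^ k * ((1 + q * b) ^ k * (1 + min (p * a) (q * b)))
          * (1 + (p + q) * (a + b)) ^ (k + 1))
      (∫ t in (0 : ℝ)..q, ∫ s in (0 : ℝ)..p, reducedIntegrand k p q a b t s) ∈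
        Set.Icc (c * R) (C * R) := by
  obtain ⟨cF, hcF, hleF⟩ := exists_le_reducedIntegrand hk
  obtain ⟨CF, hCF, hFle⟩ := exists_reducedIntegrand_le hk
  obtain ⟨cs, hcs, hles⟩ := exists_le_integral_innerWeight hk
  obtain ⟨Cs, hCs, hsle⟩ := exists_integral_innerWeight_le hk
  obtain ⟨ct, hct, hlet⟩ := exists_le_rpow_mul_betaLaplace hk
  obtain ⟨Ct, hCt, htle⟩ := exists_rpow_mul_betaLaplace_half_le hk
  refine ⟨cF * ct * cs, by positivity, CF * Ct * Cs, by positivity,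
    fun p q a b hp hpq ha hb => ?_⟩
  extract_lets R
  have hq : 0 < q := hp.trans_le hpq
  have hinner := intervalIntegrable_innerWeight hk hp a (q * b)
  have hbounds := integral_mul_integral_bounds hq.le hp.le
    (measurable_uncurry_reducedIntegrand k p q a b) hinner hinner
    (((intervalIntegrable_betaExpWeight (by positivity) (by positivity) hq _).const_mul _).const_mul
      _)
    (((intervalIntegrable_betaExpWeight (by positivity) hk hq _).const_mul _).const_mul _)
    (fun t ht s hs => hleF p q a b s t hpq hb hs ht)
    (fun t ht s hs => hFle p q a b s t hpq ha hb hs ht)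
  simp only [intervalIntegral.integral_const_mul] at hbounds
  have hnonneg : 0 ≤ ∫ s in (0 : ℝ)..p, innerWeight k p a (q * b) s :=
    le_trans (by positivity) (hles p a (q * b) hp ha (by positivity))
  have hR : R = p ^ (2 * k) / ((1 + p * a) ^ k * ((1 + q * b) ^ k * (1 + min (p * a) (q * b))))
      * ((q * (p + q)) ^ (2 * k) / (1 + (p + q) * (a + b)) ^ (k + 1)) := by
    rw [div_mul_div_comm, ← mul_rpow hp.le (by positivity), mul_comm q, ← mul_assoc]
  rw [hR]
  constructor
  · refine le_trans (le_of_eq_of_le ?_ (mul_le_mul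
      (mul_le_mul_of_nonneg_left (hlet p q (a + b) hpq hq hp.le (by positivity)) hcF.le)
      (hles p a (q * b) hp ha (by positivity)) (by positivity) ?_)) hbounds.1
    · ring
    · exact mul_nonneg hcF.le (mul_nonneg (by positivity) (betaLaplace_nonneg hq.le))
  · refine hbounds.2.trans (le_of_le_of_eq (mul_le_mul
      (mul_le_mul_of_nonneg_left (htle p q (a + b) hpq hq hp.le (by positivity)) hCF.le)
      (hsle p a (q * b) hp ha (by positivity)) hnonneg (by positivity)) ?_)
    ring

end IntegralBounds

theorem estimate_C312_case2_general (k : ℝ) (hk : 0 < k) :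
    ∃ C : ℝ, 0 < C ∧ ∀ l1 l2 l3 x1 x2 x3 : ℝ, l1 + l2 + l3 = 0 → l2 < l1 → l3 < l2 →
      x1 ≤ x3 → x2 ≤ x1 → l1 - l2 ≤ l2 - l3 →
      let F := exp (l1 * x3 + l2 * x1 + l3 * x2) /
        ((1 + (l1 - l2) * (x3 - x1)) ^ k * ((1 + (l2 - l3) * (x1 - x2)) ^ k
            * (1 + min ((l1 - l2) * (x3 - x1)) ((l2 - l3) * (x1 - x2))))
          * (1 + (l1 - l3) * (x3 - x2)) ^ (k + 1))
      C⁻¹ * F ≤ EkA2 k x1 x2 x3 l1 l2 l3 ∧ EkA2 k x1 x2 x3 l1 l2 l3 ≤ C * F := by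
  obtain ⟨c, hc, C, hC, hbounds⟩ := exists_integral_reducedIntegrand_mem_Icc hk
  set K := 3 * Gamma (3 * k) / Gamma k ^ 2 * (Gamma (k + 1 / 2) / (√π * Gamma k)) with hKdef
  have : 0 < K := by positivity
  refine ⟨max (K * C) (K * c)⁻¹, by positivity,
    fun l1 l2 l3 x1 x2 x3 hl h12 h23 hx31 hx12 hαβ => ?_⟩
  extract_lets F
  have hV : 0 < Vlam l1 l2 l3 ^ (2 * k) :=
    rpow_pos_of_pos (mul_pos (mul_pos (by linarith) (by linarith)) (by linarith)) _
  have hF : 0 ≤ F := by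
    have := sub_nonneg.2 hx31
    have := sub_nonneg.2 hx12
    have := sub_nonneg.2 (hx12.trans hx31)
    have := (sub_pos.2 h12).le
    have := (sub_pos.2 h23).le
    have := (sub_pos.2 (h23.trans h12)).le
    positivity
  obtain ⟨hlower, hupper⟩ := hbounds (l1 - l2) (l2 - l3) (x3 - x1) (x1 - x2) (sub_pos.2 h12) hαβ
    (sub_nonneg.2 hx31) (sub_nonneg.2 hx12)
  rw [sub_add_sub_cancel, sub_add_sub_cancel, ← Vlam] at hlower hupper
  have hcancel (r V D E : ℝ) (hV : 0 < V) : K * (E / V * (r * (V / D))) = K * r * (E / D) := by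
    rw [mul_left_comm (E / V), div_mul_div_cancel₀ hV.ne', mul_assoc K]
  rw [EkA2_eq_mul_integral_reducedIntegrand k x1 x2 x3 hl, ← hKdef]
  constructor
  · calc (max (K * C) (K * c)⁻¹)⁻¹ * F ≤ K * c * F := by
          gcongr
          exact inv_le_of_inv_le₀ (by positivity) (le_max_right _ _)
      _ = _ := (hcancel c _ _ _ hV).symm
      _ ≤ _ := by gcongr
  · calc _ ≤ _ := by gcongr
      _ = K * C * F := hcancel C _ _ _ hV
      _ ≤ _ := by
          gcongr
          exact le_max_left _ _

/-- Theorem 4.1: sharp estimate of the `A₂` Dunkl kernel. -/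
theorem estimate_C312_case2 (k : ℝ) (hk : 0 < k) :
    ∃ C : ℝ, 0 < C ∧ ∀ l1 l2 l3 x1 x2 x3 : ℝ,
      l1 + l2 + l3 = 0 →
      l2 < l1 →
      l3 < l2 →
      x1 + x2 + x3 = 0 →
      x1 ≤ x3 →
      x2 ≤ x1 →
      l1 - l2 ≤ l2 - l3 →
      (l2 - l3) * (x1 - x2) ≤ (l1 - l2) * (x3 - x1) →
      (C⁻¹ * (Real.exp (l1 * x3 + l2 * x1 + l3 * x2) /
          ((1 + (l1 - l2) * (x3 - x1)) ^ k * (1 + (l2 - l3) * (x1 - x2)) ^ (k + 1)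
            * (1 + (l1 - l3) * (x3 - x2)) ^ (k + 1)))
        ≤ EkA2 k x1 x2 x3 l1 l2 l3 ∧
      EkA2 k x1 x2 x3 l1 l2 l3
        ≤ C * (Real.exp (l1 * x3 + l2 * x1 + l3 * x2) /
          ((1 + (l1 - l2) * (x3 - x1)) ^ k * (1 + (l2 - l3) * (x1 - x2)) ^ (k + 1)
            * (1 + (l1 - l3) * (x3 - x2)) ^ (k + 1)))) := by
  obtain ⟨C, hC, hbounds⟩ := estimate_C312_case2_general k hk
  refine ⟨C, hC, fun l1 l2 l3 x1 x2 x3 hl h12 h23 _ hx31 hx12 hαβ hab => ?_⟩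
  have hestimate := hbounds l1 l2 l3 x1 x2 x3 hl h12 h23 hx31 hx12 hαβ
  have hpos : 0 < 1 + (l2 - l3) * (x1 - x2) := by
    linarith [mul_nonneg (sub_nonneg.2 h23.le) (sub_nonneg.2 hx12)]
  rwa [min_eq_right hab, ← rpow_add_one hpos.ne'] at hestimate
end
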